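/- (Chiodo) There is no general procedure to find a torsion element in a finitely presented group known to have torsion: there is no computable function g : ℕ × List (List (ℕ × Bool)) → List (ℕ × Bool) such that for every encoded finite presentation P whose presented group G_P contains a nontrivial element of finite order (∃ x : G_P, x ≠ 1 ∧ IsOfFinOrder x), the element π_P (FreeGroup.mk (g P)) is nontrivial and of finite order in G_P. -/

import Mathlib

/-- The set of relators of the finite presentation encoded by
`P = (n, L) : ℕ × List (List (ℕ × Bool))`: the words in `L`, together with all
generators `FreeGroup.of i` for `i ≥ n`. -/
def presRels (P : ℕ × List (List (ℕ × Bool))) : Set (FreeGroup ℕ) :=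
  {r | ∃ w ∈ P.2, r = FreeGroup.mk w} ∪ {r | ∃ i : ℕ, P.1 ≤ i ∧ r = FreeGroup.of i}

/-- The group presented by an encoded finite presentation. -/
def presGroup (P : ℕ × List (List (ℕ × Bool))) : Type :=
  PresentedGroup (presRels P)

instance (P : ℕ × List (List (ℕ × Bool))) : Group (presGroup P) :=
  inferInstanceAs (Group (PresentedGroup (presRels P)))

/-- The canonical projection from the free group to the presented group. -/
def presProj (P : ℕ × List (List (ℕ × Bool))) : FreeGroup ℕ →* presGroup P :=
  PresentedGroup.mk (presRels P)

/-!
A torsion finder would separate a recursively inseparable pair of r.e. sets `p false`, `p true`.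

For each partial recursive `f` there is a uniformly computable family of finitely presented groups
`Q k` which are free if `f k` is defined and have an element of order two otherwise. To build it, a
Turing machine is viewed as an affine machine: a configuration is a state together with a point of
`ℤ × ℤ` (the two half-tapes, read as numbers), and a rule carries one affine copy of `ℤ × ℤ` to
another. In the lamplighter group over `states × (ℤ × ℤ)` every rule is an isomorphism between two
subgroups, hence becomes conjugation by a stable letter in an HNN extension. By Britton's lemma the
subgroup generated by the stable letters and the lamps connected to a halting configuration meets
the lamps in no other lamp. An extra letter `κ` is made to centralize the stable letters and the
halting lamps; the commutator `v` of `κ` with the initial lamp is then trivial if the machine halts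
and of infinite order otherwise. Adjoining letters that conjugate `v` to each generator, and a
letter `y` with `⁅y, v⁆ ^ 2 = 1`, gives a free group when `v = 1` and an element of order two when
`v` has infinite order.

Applied to `p false` and `p true`, this gives two groups at least one of which has torsion, so the
finder returns a torsion element of their free product. Such an element is conjugate into exactly
one of the factors, hence exactly one of its two projections to the factors is trivial. As the word
problem is r.e., one can compute which, and the projection to a torsion-free factor is trivial.
-/

section HNN

open HNNExtension HNNExtension.NormalWord

universe u

variable {G : Type u} [Group G]

section OneStableLetter

variable {A B : Subgroup G} {φ : A ≃* B} {S : Subgroup G}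

/-- The elements of an HNN extension that are products of reduced words all of whose coefficients
lie in the subgroup `S` of the base group. -/
def IsReducedProdOver (φ : A ≃* B) (S : Subgroup G) (x : HNNExtension G A B φ) : Prop :=
  ∃ w : ReducedWord G A B, w.head ∈ S ∧ (∀ p ∈ w.toList, p.2 ∈ S) ∧ w.prod φ = x

theorem IsReducedProdOver.of_mul {x : HNNExtension G A B φ} (hx : IsReducedProdOver φ S x) {s : G}
    (hs : s ∈ S) : IsReducedProdOver φ S (of s * x) := by
  obtain ⟨w, hhead, hlist, rfl⟩ := hx
  exact ⟨⟨s * w.head, w.toList, w.chain⟩, S.mul_mem hs hhead, hlist,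
    by simp [ReducedWord.prod, mul_assoc]⟩

theorem of_toSubgroupEquiv_eq_conj (u : ℤˣ) (g : toSubgroup A B u) :
    (of (toSubgroupEquiv φ u g : G) : HNNExtension G A B φ) =
      t ^ (u : ℤ) * of (g : G) * t ^ (-(u : ℤ)) := by
  rcases Int.units_eq_one_or u with rfl | rfl
  · exact (equiv_eq_conj (φ := φ) g).trans (by simp)
  · exact (equiv_symm_eq_conj (φ := φ) g).trans (by simp)

theorem toSubgroupEquiv_mem_of_mem (hS : ∀ a : A, (a : G) ∈ S ↔ (φ a : G) ∈ S) (u : ℤˣ)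
    {g : toSubgroup A B u} (hg : (g : G) ∈ S) : (toSubgroupEquiv φ u g : G) ∈ S := by
  rcases Int.units_eq_one_or u with rfl | rfl
  · exact (hS g).1 hg
  · exact (hS (φ.symm g)).2 ((φ.apply_symm_apply g).symm ▸ hg)

theorem IsReducedProdOver.t_zpow_mul (hS : ∀ a : A, (a : G) ∈ S ↔ (φ a : G) ∈ S) (u : ℤˣ)
    {x : HNNExtension G A B φ} (hx : IsReducedProdOver φ S x) :
    IsReducedProdOver φ S (t ^ (u : ℤ) * x) := by
  obtain ⟨⟨g, l, hchain⟩, hhead, hlist, rfl⟩ := hx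
  by_cases hpinch : g ∈ toSubgroup A B u ∧ ∃ g' l', l = (-u, g') :: l'
  · obtain ⟨hg, g', l', rfl⟩ := hpinch
    refine ⟨⟨toSubgroupEquiv φ u ⟨g, hg⟩ * g', l', hchain.tail⟩,
      S.mul_mem (toSubgroupEquiv_mem_of_mem hS u hhead) (hlist (-u, g') (by simp)),
      fun p hp => hlist p (by simp [hp]), ?_⟩
    simp only [ReducedWord.prod, map_mul, of_toSubgroupEquiv_eq_conj, List.map_cons,
      List.prod_cons, Units.val_neg]
    group
  · have hreduced : List.IsChain
        (fun a b => a.2 ∈ toSubgroup A B a.1 → a.1 = b.1) ((u, g) :: l) := by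
      refine List.isChain_cons.2 ⟨fun p hp hg => ?_, hchain⟩
      by_contra hne
      have hp1 : p.1 = -u := by
        rcases Int.units_eq_one_or u with h | h <;>
        rcases Int.units_eq_one_or p.1 with h' | h' <;> simp_all
      obtain ⟨l', rfl⟩ := List.head?_eq_some_iff.1 hp
      exact hpinch ⟨hg, p.2, l', by rw [← hp1]⟩
    exact ⟨⟨1, (u, g) :: l, hreduced⟩, S.one_mem, List.forall_mem_cons.2 ⟨hhead, hlist⟩,
      by simp [ReducedWord.prod, mul_assoc]⟩

theorem isReducedProdOver_of_mem_closure (hS : ∀ a : A, (a : G) ∈ S ↔ (φ a : G) ∈ S)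
    {x : HNNExtension G A B φ} (hx : x ∈ Subgroup.closure (of '' (S : Set G) ∪ {t})) :
    IsReducedProdOver φ S x := by
  induction hx using Subgroup.closure_induction_left with
  | one => exact ⟨ReducedWord.empty G A B, S.one_mem, by simp, by simp [ReducedWord.prod]⟩
  | mul_left x hx y _ ih =>
    rcases hx with ⟨s, hs, rfl⟩ | rfl
    · exact ih.of_mul hs
    · simpa using ih.t_zpow_mul hS 1
  | inv_mul_cancel x hx y _ ih =>
    rcases hx with ⟨s, hs, rfl⟩ | rfl
    · simpa using ih.of_mul (S.inv_mem hs)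
    · simpa using ih.t_zpow_mul hS (-1)

theorem comap_of_closure_insert_t (hS : ∀ a : A, (a : G) ∈ S ↔ (φ a : G) ∈ S) :
    (Subgroup.closure ((of : G →* HNNExtension G A B φ) '' (S : Set G) ∪ {t})).comap of = S := by
  refine le_antisymm (fun g hg => ?_)
    (fun g hg => Subgroup.subset_closure (Or.inl ⟨g, hg, rfl⟩))
  obtain ⟨w, hhead, -, hprod⟩ := isReducedProdOver_of_mem_closure hS hg
  -- Britton's lemma: a reduced word representing an element of the base has no stable letter.
  have hnil := ReducedWord.toList_eq_nil_of_mem_of_range φ w (by rw [hprod]; exact ⟨g, rfl⟩)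
  have hg' : (of w.head : HNNExtension G A B φ) = of g := by
    simpa [ReducedWord.prod, hnil] using hprod
  exact of_injective φ hg' ▸ hhead

end OneStableLetter

theorem exists_extension_conjugating {K : Type*} [Group K] {f₁ f₂ : K →* G}
    (hf₁ : Function.Injective f₁) (hf₂ : Function.Injective f₂) {S : Subgroup G}
    (hS : S.comap f₁ = S.comap f₂) :
    ∃ (E : Type u) (_ : Group E) (j : G →* E) (r : E) (T : Subgroup E), Function.Injective j ∧
      T.comap j = S ∧ r ∈ T ∧ ∀ k, r * j (f₁ k) * r⁻¹ = j (f₂ k) := by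
  let φ : f₁.range ≃* f₂.range :=
    (MonoidHom.ofInjective hf₁).symm.trans (MonoidHom.ofInjective hf₂)
  have hφ (k : K) : φ (MonoidHom.ofInjective hf₁ k) = MonoidHom.ofInjective hf₂ k := by simp [φ]
  have hSφ (a : f₁.range) : (a : G) ∈ S ↔ (φ a : G) ∈ S := by
    obtain ⟨k, rfl⟩ := (MonoidHom.ofInjective hf₁).surjective a
    rw [hφ]
    exact iff_of_eq (congrArg (k ∈ ·) hS)
  refine ⟨HNNExtension G f₁.range f₂.range φ, inferInstance, of, t, _, of_injective φ,
    comap_of_closure_insert_t hSφ, Subgroup.subset_closure (Or.inr rfl), fun k => ?_⟩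
  simpa [hφ, MonoidHom.ofInjective_apply] using
    (equiv_eq_conj (φ := φ) (MonoidHom.ofInjective hf₁ k)).symm

theorem exists_extension_conjugating_family {ι : Type*} [Finite ι] {K : ι → Type*}
    [∀ i, Group (K i)] {f₁ f₂ : ∀ i, K i →* G} (hf₁ : ∀ i, Function.Injective (f₁ i))
    (hf₂ : ∀ i, Function.Injective (f₂ i)) {S : Subgroup G}
    (hS : ∀ i, S.comap (f₁ i) = S.comap (f₂ i)) :
    ∃ (E : Type u) (_ : Group E) (j : G →* E) (r : ι → E) (T : Subgroup E), Function.Injective j ∧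
      T.comap j = S ∧ (∀ i, r i ∈ T) ∧ ∀ i k, r i * j (f₁ i k) * (r i)⁻¹ = j (f₂ i k) := by
  induction ι using Finite.induction_empty_option with
  | of_equiv e ih =>
    obtain ⟨E, _, j, r, T, hj, hT, hr, hconj⟩ :=
      ih (fun i => hf₁ (e i)) (fun i => hf₂ (e i)) (fun i => hS (e i))
    exact ⟨E, _, j, r ∘ e.symm, T, hj, hT, fun i => hr _,
      e.forall_congr_right.1 fun i => by simpa using hconj i⟩
  | h_empty => exact ⟨G, _, .id G, PEmpty.elim, S, Function.injective_id, rfl, nofun, nofun⟩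
  | h_option ih =>
    obtain ⟨E, _, j, r, T, hj, rfl, hr, hconj⟩ :=
      ih (fun i => hf₁ (some i)) (fun i => hf₂ (some i)) (fun i => hS (some i))
    obtain ⟨E', _, j', r', T', hj', rfl, hr', hconj'⟩ := exists_extension_conjugating
      (f₁ := j.comp (f₁ none)) (f₂ := j.comp (f₂ none)) (hj.comp (hf₁ none)) (hj.comp (hf₂ none))
      (S := T) (hS none)
    refine ⟨E', _, j'.comp j, fun i => i.elim r' (j' ∘ r), T', hj'.comp hj, rfl, ?_, ?_⟩
    · exact Option.rec hr' hr
    · refine Option.rec hconj' fun i k => ?_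
      simp [← hconj]

end HNN

section Lamplighter

/-- The unrestricted lamplighter group `(St × V → ℤ) ⋊ V` with one family of integer lamps, indexed
by `V`, for every state in `St`. -/
@[ext]
structure Lamplighter (St V : Type*) where
  lamp : St × V → ℤ
  pos : V

namespace Lamplighter

variable {St V : Type*}

section AddCommGroup

variable [AddCommGroup V]

instance : Mul (Lamplighter St V) :=
  ⟨fun p q => ⟨fun c => p.lamp c + q.lamp (c.1, c.2 + p.pos), p.pos + q.pos⟩⟩

instance : One (Lamplighter St V) := ⟨⟨0, 0⟩⟩

instance : Inv (Lamplighter St V) := ⟨fun p => ⟨fun c => -p.lamp (c.1, c.2 - p.pos), -p.pos⟩⟩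

@[simp] theorem mul_lamp (p q : Lamplighter St V) (c : St × V) :
    (p * q).lamp c = p.lamp c + q.lamp (c.1, c.2 + p.pos) := rfl

@[simp] theorem mul_pos (p q : Lamplighter St V) : (p * q).pos = p.pos + q.pos := rfl

@[simp] theorem one_lamp (c : St × V) : (1 : Lamplighter St V).lamp c = 0 := rfl

@[simp] theorem one_pos : (1 : Lamplighter St V).pos = 0 := rfl

@[simp] theorem inv_lamp (p : Lamplighter St V) (c : St × V) :
    p⁻¹.lamp c = -p.lamp (c.1, c.2 - p.pos) := rfl

@[simp] theorem inv_pos (p : Lamplighter St V) : p⁻¹.pos = -p.pos := rfl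

instance : Group (Lamplighter St V) :=
  Group.ofLeftAxioms (fun p q r => by ext <;> simp [add_assoc]) (fun p => by ext <;> simp)
    (fun p => by ext <;> simp [sub_eq_add_neg])

/-- The translations, as a subgroup of the lamplighter group. -/
@[simps]
def shift : Multiplicative V →* Lamplighter St V where
  toFun a := ⟨0, a.toAdd⟩
  map_one' := rfl
  map_mul' a b := by ext <;> simp

/-- The lamp configurations, as a normal subgroup of the lamplighter group. -/
@[simps]
def lamps : Multiplicative (St × V → ℤ) →* Lamplighter St V where
  toFun f := ⟨f.toAdd, 0⟩
  map_one' := rfl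
  map_mul' f g := by ext <;> simp

theorem shift_injective : Function.Injective (shift : Multiplicative V →* Lamplighter St V) :=
  fun _ _ h => congrArg pos h

theorem lamps_injective : Function.Injective (lamps : _ →* Lamplighter St V) :=
  fun _ _ h => congrArg lamp h

open Classical in
/-- The element lighting the single lamp `c`. -/
noncomputable def single (c : St × V) : Lamplighter St V := lamps (.ofAdd (Pi.single c 1))

theorem shift_inv_mul_single_mul_shift (s : St) (a : V) :
    (shift (.ofAdd a))⁻¹ * single (s, 0) * shift (.ofAdd a) = single (s, a) := by
  classical
  ext ⟨s', b⟩
  · have hiff : (s', b - a) = (s, 0) ↔ (s', b) = (s, a) := by simp [sub_eq_zero]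
    simpa [single, Pi.single_apply, ← sub_eq_add_neg] using if_congr hiff rfl rfl
  · simp [single]

theorem not_isOfFinOrder_single (c : St × V) : ¬IsOfFinOrder (single c) := fun h => by
  have h' := (lamps_injective.isOfFinOrder_iff.1 h).eq_one'
  simpa using congrFun (congrArg Multiplicative.toAdd h') c

/-- The lamp configurations supported in `P`. -/
def supportedIn (P : Set (St × V)) : Subgroup (Lamplighter St V) where
  carrier := {p | p.pos = 0 ∧ ∀ c ∉ P, p.lamp c = 0}
  one_mem' := ⟨rfl, fun _ _ => rfl⟩
  mul_mem' := fun ⟨hp, hp'⟩ ⟨hq, hq'⟩ =>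
    ⟨by simp [hp, hq], fun c hc => by simp [hp, hp' c hc, hq' c hc]⟩
  inv_mem' := fun ⟨hp, hp'⟩ => ⟨by simp [hp], fun c hc => by simp [hp, hp' c hc]⟩

theorem single_mem_supportedIn {P : Set (St × V)} {c : St × V} :
    single c ∈ supportedIn P ↔ c ∈ P := by
  refine ⟨fun ⟨_, h⟩ => by_contra fun hc => by simpa [single] using h c hc,
    fun hc => ⟨rfl, fun c' hc' => ?_⟩⟩
  have hne : c' ≠ c := fun h => hc' (h ▸ hc)
  simp [single, hne]

end AddCommGroup

end Lamplighter

end Lamplighter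

section AffineMachine

/-- An affine copy `{(state, origin + step * z) | z : V}` of the ring `V` inside the set `St × V` of
configurations, with injective parametrization. -/
structure AffineCopy (St V : Type*) [Ring V] where
  state : St
  origin : V
  step : V
  isLeftRegular_step : IsLeftRegular step

namespace AffineCopy

variable {St V : Type*} [Ring V] (A : AffineCopy St V)

/-- The parametrization of an affine copy of `V`. -/
def point (z : V) : St × V := (A.state, A.origin + A.step * z)

theorem point_injective : Function.Injective A.point := fun _ _ h =>
  A.isLeftRegular_step (add_left_cancel (congrArg Prod.snd h))

theorem point_add (z a : V) : A.point (z + a) = ((A.point z).1, (A.point z).2 + A.step * a) := by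
  simp [point, mul_add, add_assoc]

open Lamplighter Function

theorem extend_point_shift (f : V → ℤ) (a : V) (c : St × V) :
    extend A.point f 0 (c.1, c.2 + A.step * a) = extend A.point (fun z => f (z + a)) 0 c := by
  by_cases hc : ∃ z, A.point z = c
  · obtain ⟨z, rfl⟩ := hc
    rw [← A.point_add, A.point_injective.extend_apply, A.point_injective.extend_apply]
  · have hc' : ¬∃ z, A.point z = (c.1, c.2 + A.step * a) := by
      rintro ⟨z, hz⟩
      refine hc ⟨z - a, ?_⟩
      rw [sub_eq_add_neg, point_add, hz]
      simp
    rw [extend_apply' _ _ _ hc, extend_apply' _ _ _ hc', Pi.zero_apply, Pi.zero_apply]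

/-- The embedding of the one-state lamplighter group along an affine copy of `V`. -/
noncomputable def embedding : Lamplighter Unit V →* Lamplighter St V where
  toFun p := ⟨extend A.point (fun z => p.lamp ((), z)) 0, A.step * p.pos⟩
  map_one' := Lamplighter.ext (extend_const A.point (0 : ℤ)) (mul_zero _)
  map_mul' p q := by
    ext c
    · simpa [extend_point_shift, Pi.add_def] using congrFun (extend_add A.point
        (fun z => p.lamp ((), z)) (fun z => q.lamp ((), z + p.pos)) 0 0) c
    · simp [mul_add]

theorem embedding_injective : Injective A.embedding := fun p q h => by
  refine Lamplighter.ext (funext fun c => ?_) (A.isLeftRegular_step (congrArg pos h))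
  simpa [embedding, A.point_injective.extend_apply] using congrFun (congrArg lamp h) (A.point c.2)

theorem embedding_shift (a : V) :
    A.embedding (shift (.ofAdd a)) = shift (.ofAdd (A.step * a)) :=
  Lamplighter.ext (extend_const A.point (0 : ℤ)) rfl

theorem embedding_single_zero : A.embedding (single ((), 0)) = single (A.state, A.origin) := by
  classical
  have hzero : A.point 0 = (A.state, A.origin) := by simp [point]
  ext c
  · by_cases hc : ∃ z, A.point z = c
    · obtain ⟨z, rfl⟩ := hc
      have hiff : ((), z) = ((), (0 : V)) ↔ A.point z = A.point 0 := by
        simp [A.point_injective.eq_iff]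
      simpa [embedding, single, ← hzero, A.point_injective.extend_apply, Pi.single_apply]
        using if_congr hiff rfl rfl
    · have hne : c ≠ (A.state, A.origin) := fun h => hc ⟨0, hzero.trans h.symm⟩
      simp [embedding, single, extend_apply' _ _ _ hc, hne]
  · simp [embedding, single]

theorem comap_embedding_supportedIn (P : Set (St × V)) :
    (supportedIn P).comap A.embedding = supportedIn {c | A.point c.2 ∈ P} := by
  ext p
  refine and_congr (by simp [embedding, A.isLeftRegular_step.mul_left_eq_zero_iff])
    ⟨fun h c hc => ?_, fun h c hc => ?_⟩
  · simpa [embedding, A.point_injective.extend_apply] using h (A.point c.2) hc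
  · by_cases hc' : ∃ z, A.point z = c
    · obtain ⟨z, rfl⟩ := hc'
      simpa [embedding, A.point_injective.extend_apply] using h ((), z) hc
    · simp [embedding, extend_apply' _ _ _ hc']

end AffineCopy

open Lamplighter

universe u

variable {St V : Type u} [Ring V] {Rule : Type*}

/-- The configurations joined to a halting configuration `(s, 0)`, `s ∈ H`, by applying forwards or
backwards the rules `ρ`, each of which moves the point of parameter `z` of the affine copy `(R ρ).1`
to the point of parameter `z` of `(R ρ).2`. -/
inductive HaltConnected (R : Rule → AffineCopy St V × AffineCopy St V) (H : Set St) : St × V → Prop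
  | halt {s : St} (hs : s ∈ H) : HaltConnected R H (s, 0)
  | forward (ρ : Rule) (z : V) : HaltConnected R H ((R ρ).1.point z) →
      HaltConnected R H ((R ρ).2.point z)
  | backward (ρ : Rule) (z : V) : HaltConnected R H ((R ρ).2.point z) →
      HaltConnected R H ((R ρ).1.point z)

theorem exists_lamplighter_extension [Finite Rule] (R : Rule → AffineCopy St V × AffineCopy St V)
    (H : Set St) :
    ∃ (E : Type u) (_ : Group E) (j : Lamplighter St V →* E) (r : Rule → E) (T : Subgroup E),
      Function.Injective j ∧ (∀ c, j (single c) ∈ T ↔ HaltConnected R H c) ∧ (∀ ρ, r ρ ∈ T) ∧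
      ∀ ρ p, r ρ * j ((R ρ).1.embedding p) * (r ρ)⁻¹ = j ((R ρ).2.embedding p) := by
  have hS (ρ : Rule) : (supportedIn {c | HaltConnected R H c}).comap (R ρ).1.embedding =
      (supportedIn {c | HaltConnected R H c}).comap (R ρ).2.embedding := by
    have h (z : V) : HaltConnected R H ((R ρ).1.point z) ↔ HaltConnected R H ((R ρ).2.point z) :=
      ⟨.forward ρ z, .backward ρ z⟩
    simp only [AffineCopy.comap_embedding_supportedIn, Set.mem_ofPred_eq, h]
  obtain ⟨E, _, j, r, T, hj, hT, hr, hconj⟩ := exists_extension_conjugating_family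
    (fun ρ => (R ρ).1.embedding_injective) (fun ρ => (R ρ).2.embedding_injective) hS
  refine ⟨E, _, j, r, T, hj, fun c => ?_, hr, hconj⟩
  rw [← Subgroup.mem_comap, hT, single_mem_supportedIn, Set.mem_ofPred_eq]

end AffineMachine

section CosetShift

open Equiv
open scoped commutatorElement

universe u

theorem not_isOfFinOrder_of_apply_eq_add_one {α : Type*} {f : Perm (α × ℤ)} {a : α}
    (hf : ∀ n, f (a, n) = (a, n + 1)) : ¬IsOfFinOrder f := fun h => by
  obtain ⟨k, hk, hfk⟩ := isOfFinOrder_iff_pow_eq_one.1 h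
  have hsemi : Function.Semiconj (Prod.mk a) (fun n : ℤ => n + 1) f := fun n => (hf n).symm
  have hiter := hsemi.iterate_right k 0
  rw [Perm.iterate_eq_pow, hfk, Perm.one_apply, Prod.mk_right_inj] at hiter
  have hzero : (k : ℤ) = 0 := by simpa using hiter
  omega

/-- The permutation action of `G` on `α × ℤ` through the first factor. -/
@[simps]
def toPermFst (G α : Type*) [Group G] [MulAction G α] : G →* Perm (α × ℤ) where
  toFun g := (MulAction.toPerm g).prodCongr (Equiv.refl ℤ)
  map_one' := by ext <;> simp
  map_mul' g h := by ext <;> simp [mul_smul]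

variable {G α : Type*} [Group G] [MulAction G α]

open Classical in
/-- The permutation of `α × ℤ` that shifts the fibre over `a` by one. -/
noncomputable def fiberShift (a : α) : Perm (α × ℤ) := Perm.prodExtendRight a (Equiv.addRight 1)

theorem fiberShift_apply_self (a : α) (n : ℤ) : fiberShift a (a, n) = (a, n + 1) := by
  simp [fiberShift]

theorem fiberShift_apply_of_ne {a b : α} (h : b ≠ a) (n : ℤ) : fiberShift a (b, n) = (b, n) := by
  classical exact Perm.prodExtendRight_apply_ne _ h n

theorem commute_fiberShift_of_smul_eq {a : α} {g : G} (hg : g • a = a) :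
    Commute (fiberShift a) (toPermFst G α g) := by
  refine Equiv.ext fun ⟨b, n⟩ => ?_
  by_cases hb : b = a
  · simp [hb, hg, fiberShift_apply_self]
  · have hb' : g • b ≠ a := fun h => hb (smul_left_cancel g (h.trans hg.symm))
    simp [fiberShift_apply_of_ne hb, fiberShift_apply_of_ne hb']

theorem commutator_fiberShift_apply_of_smul_ne {a : α} {g : G} (hg : g • a ≠ a) (n : ℤ) :
    ⁅fiberShift a, toPermFst G α g⁆ (a, n) = (a, n + 1) := by
  have hg' : g⁻¹ • a ≠ a := fun h => hg (inv_smul_eq_iff.1 h).symm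
  have hfix : (fiberShift a).symm (g⁻¹ • a, n) = (g⁻¹ • a, n) :=
    (Equiv.symm_apply_eq _).2 (fiberShift_apply_of_ne hg' n).symm
  rw [commutatorElement_def, ← map_inv]
  simp [hfix, fiberShift_apply_self]

theorem exists_extension_centralizing {G : Type u} [Group G] (S : Subgroup G) :
    ∃ (U : Type u) (_ : Group U) (ψ : G →* U) (κ z : U), Function.Injective ψ ∧
      (∀ u, Commute z u) ∧ (∀ g ∈ S, Commute κ (ψ g)) ∧ ¬IsOfFinOrder κ ∧
      (∀ g ∉ S, ¬IsOfFinOrder ⁅κ, ψ g⁆) ∧ ∀ g, ¬IsOfFinOrder (ψ g * z) := by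
  let P := Perm ((G ⧸ S) × ℤ)
  let κ : P := fiberShift (1 : G)
  let ψ : G →* G × P × Multiplicative ℤ := .prod (.id G) (.prod (toPermFst G (G ⧸ S)) 1)
  have hfix (g : G) : g • ((1 : G) : G ⧸ S) = ((1 : G) : G ⧸ S) ↔ g ∈ S := by
    rw [MulAction.Quotient.smul_coe, smul_eq_mul, mul_one, eq_comm, QuotientGroup.eq]
    simp
  refine ⟨G × P × Multiplicative ℤ, inferInstance, ψ, (1, κ, 1), (1, 1, .ofAdd 1),
    fun g h hgh => congrArg Prod.fst hgh, fun u => ?_, fun g hg => ?_, fun h => ?_,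
    fun g hg h => ?_, fun g h => ?_⟩
  · simp [Commute, SemiconjBy, Prod.ext_iff, mul_comm]
  · exact (Commute.one_left _).prod
      ((commute_fiberShift_of_smul_eq ((hfix g).2 hg)).prod (Commute.one_left _))
  · exact not_isOfFinOrder_of_apply_eq_add_one (fiberShift_apply_self _) h.snd.fst
  · exact not_isOfFinOrder_of_apply_eq_add_one
      (commutator_fiberShift_apply_of_smul_ne (mt (hfix g).1 hg)) h.snd.fst
  · have := h.snd.snd.eq_one'
    simp [ψ] at this

end CosetShift

section MachineGroup

open scoped commutatorElement

section Translate

variable {U W : Type*} [Group U] [Group W]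

/-- `x ^ m * y ^ n`, the image of `a = (m, n)` when `x` and `y` commute. -/
def latticeWord (x y : U) (a : ℤ × ℤ) : U := x ^ a.1 * y ^ a.2

/-- The conjugate of `t` that stands for the configuration at position `a`. -/
def latticeConj (x y t : U) (a : ℤ × ℤ) : U := (latticeWord x y a)⁻¹ * t * latticeWord x y a

theorem map_latticeWord (f : U →* W) (x y : U) (a : ℤ × ℤ) :
    f (latticeWord x y a) = latticeWord (f x) (f y) a := by
  simp [latticeWord]

theorem map_latticeConj (f : U →* W) (x y t : U) (a : ℤ × ℤ) :
    f (latticeConj x y t a) = latticeConj (f x) (f y) (f t) a := by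
  simp [latticeConj, map_latticeWord]

variable {x y : U}

theorem latticeWord_add (hxy : Commute x y) (a b : ℤ × ℤ) :
    latticeWord x y (a + b) = latticeWord x y a * latticeWord x y b := by
  simp only [latticeWord, Prod.fst_add, Prod.snd_add, zpow_add]
  rw [mul_assoc, ← mul_assoc (x ^ b.1), (hxy.zpow_zpow b.1 a.2).eq]
  simp only [mul_assoc]

theorem latticeConj_add (hxy : Commute x y) (t : U) (a b : ℤ × ℤ) :
    latticeConj x y t (a + b) =
      (latticeWord x y b)⁻¹ * latticeConj x y t a * latticeWord x y b := by
  simp only [latticeConj, latticeWord_add hxy, mul_inv_rev, mul_assoc]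

end Translate

/-- The generators of the group of an affine machine: two translations `x` and `y`, a letter for
each state and each rule, a letter `κ` testing connectedness to a halting configuration, and a
letter `τ` for the initial configuration. -/
inductive MachineGen (St Rule : Type*)
  | x | y | state (s : St) | rule (ρ : Rule) | κ | τ
  deriving Fintype

instance {St Rule : Type*} [Finite St] [Finite Rule] : Finite (MachineGen St Rule) :=
  have := Fintype.ofFinite St
  have := Fintype.ofFinite Rule
  inferInstance

variable {St Rule : Type} (R : Rule → AffineCopy St (ℤ × ℤ) × AffineCopy St (ℤ × ℤ)) (H : Set St)

/-- The relations of the group of an affine machine, for a family `u` of elements of a group. -/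
structure IsMachineModel {U : Type*} [Group U] (u : MachineGen St Rule → U) : Prop where
  commute_x_y : Commute (u .x) (u .y)
  conj_x (ρ : Rule) :
    u (.rule ρ) * u .x ^ (R ρ).1.step.1 * (u (.rule ρ))⁻¹ = u .x ^ (R ρ).2.step.1
  conj_y (ρ : Rule) :
    u (.rule ρ) * u .y ^ (R ρ).1.step.2 * (u (.rule ρ))⁻¹ = u .y ^ (R ρ).2.step.2
  conj_origin (ρ : Rule) :
    u (.rule ρ) * latticeConj (u .x) (u .y) (u (.state (R ρ).1.state)) (R ρ).1.origin *
      (u (.rule ρ))⁻¹ = latticeConj (u .x) (u .y) (u (.state (R ρ).2.state)) (R ρ).2.origin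
  commute_κ_rule (ρ : Rule) : Commute (u .κ) (u (.rule ρ))
  commute_κ_state {s : St} (hs : s ∈ H) : Commute (u .κ) (u (.state s))

/-- The relators expressing `IsMachineModel`. -/
def machineRels : Set (FreeGroup (MachineGen St Rule)) :=
  let u := FreeGroup.of
  {⁅u .x, u .y⁆} ∪
  Set.range (fun ρ =>
    u (.rule ρ) * u .x ^ (R ρ).1.step.1 * (u (.rule ρ))⁻¹ * (u .x ^ (R ρ).2.step.1)⁻¹) ∪
  Set.range (fun ρ =>
    u (.rule ρ) * u .y ^ (R ρ).1.step.2 * (u (.rule ρ))⁻¹ * (u .y ^ (R ρ).2.step.2)⁻¹) ∪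
  Set.range (fun ρ =>
    u (.rule ρ) * latticeConj (u .x) (u .y) (u (.state (R ρ).1.state)) (R ρ).1.origin *
      (u (.rule ρ))⁻¹ * (latticeConj (u .x) (u .y) (u (.state (R ρ).2.state)) (R ρ).2.origin)⁻¹) ∪
  Set.range (fun ρ => ⁅u .κ, u (.rule ρ)⁆) ∪
  (fun s => ⁅u .κ, u (.state s)⁆) '' H

/-- The relator declaring that `τ` stands for the configuration `c`. -/
def inputRel (c : St × ℤ × ℤ) : FreeGroup (MachineGen St Rule) :=
  latticeConj (.of .x) (.of .y) (.of (.state c.1)) c.2 * (.of .τ)⁻¹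

variable {R H}

theorem finite_machineRels [Finite St] [Finite Rule] : (machineRels R H).Finite :=
  (((((Set.finite_singleton _).union (Set.finite_range _)).union (Set.finite_range _)).union
    (Set.finite_range _)).union (Set.finite_range _)).union (H.toFinite.image _)

variable {U : Type*} [Group U] {u : MachineGen St Rule → U}

theorem isMachineModel_iff_lift_eq_one :
    IsMachineModel R H u ↔ ∀ w ∈ machineRels R H, FreeGroup.lift u w = 1 := by
  simp only [machineRels, Set.mem_union, or_imp, forall_and,
    Set.mem_singleton_iff, forall_eq, Set.forall_mem_range, Set.forall_mem_image,
    map_commutatorElement, commutatorElement_eq_one_iff_commute, map_mul, map_inv, map_zpow,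
    map_latticeConj, FreeGroup.lift_apply_of, mul_inv_eq_one]
  exact ⟨fun h => ⟨⟨⟨⟨⟨h.1, h.2⟩, h.3⟩, h.4⟩, h.5⟩, fun _ => h.6⟩,
    fun ⟨⟨⟨⟨⟨h₁, h₂⟩, h₃⟩, h₄⟩, h₅⟩, h₆⟩ => ⟨h₁, h₂, h₃, h₄, h₅, @h₆⟩⟩

theorem lift_inputRel_eq_one_iff {c : St × ℤ × ℤ} :
    FreeGroup.lift u (inputRel c) = 1 ↔ latticeConj (u .x) (u .y) (u (.state c.1)) c.2 = u .τ := by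
  simp [inputRel, map_latticeConj, mul_inv_eq_one]

namespace IsMachineModel

theorem conj_latticeWord (hu : IsMachineModel R H u) (ρ : Rule) (z : ℤ × ℤ) :
    u (.rule ρ) * latticeWord (u .x) (u .y) ((R ρ).1.step * z) * (u (.rule ρ))⁻¹ =
      latticeWord (u .x) (u .y) ((R ρ).2.step * z) := by
  simp only [latticeWord, Prod.fst_mul, Prod.snd_mul, zpow_mul, ← hu.conj_x, ← hu.conj_y, conj_zpow]
  group

theorem conj_point (hu : IsMachineModel R H u) (ρ : Rule) (z : ℤ × ℤ) :
    u (.rule ρ) * latticeConj (u .x) (u .y) (u (.state ((R ρ).1.point z).1)) ((R ρ).1.point z).2 *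
      (u (.rule ρ))⁻¹ =
        latticeConj (u .x) (u .y) (u (.state ((R ρ).2.point z).1)) ((R ρ).2.point z).2 := by
  simp only [AffineCopy.point, latticeConj_add hu.commute_x_y, ← hu.conj_latticeWord,
    ← hu.conj_origin]
  group

theorem commute_κ_of_haltConnected (hu : IsMachineModel R H u) {c : St × ℤ × ℤ}
    (hc : HaltConnected R H c) :
    Commute (u .κ) (latticeConj (u .x) (u .y) (u (.state c.1)) c.2) := by
  induction hc with
  | halt hs => simpa [latticeConj, latticeWord] using hu.commute_κ_state hs
  | forward ρ z _ ih =>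
    rw [← hu.conj_point]
    exact ((hu.commute_κ_rule ρ).mul_right ih).mul_right (hu.commute_κ_rule ρ).inv_right
  | backward ρ z _ ih =>
    have hpoint := hu.conj_point ρ z
    rw [mul_inv_eq_iff_eq_mul, ← eq_inv_mul_iff_mul_eq] at hpoint
    rw [hpoint]
    exact (hu.commute_κ_rule ρ).inv_right.mul_right (ih.mul_right (hu.commute_κ_rule ρ))

end IsMachineModel

section LamplighterModel

open Lamplighter

variable {i : Lamplighter St (ℤ × ℤ) →* U} {r : Rule → U} {κ : U} {c : St × ℤ × ℤ}

/-- The interpretation of the generators in a group `U` containing the lamplighter group through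
`i`: the state `s` is the lamp at `(s, 0)`. -/
noncomputable def lamplighterModel (i : Lamplighter St (ℤ × ℤ) →* U) (r : Rule → U) (κ : U)
    (c : St × ℤ × ℤ) : MachineGen St Rule → U
  | .x => i (shift (.ofAdd (1, 0)))
  | .y => i (shift (.ofAdd (0, 1)))
  | .state s => i (single (s, 0))
  | .rule ρ => r ρ
  | .κ => κ
  | .τ => i (single c)

theorem latticeWord_lamplighterModel (a : ℤ × ℤ) :
    latticeWord (lamplighterModel i r κ c .x) (lamplighterModel i r κ c .y) a =
      i (shift (.ofAdd a)) := by
  simp only [latticeWord, lamplighterModel, ← map_zpow, ← map_mul, ← ofAdd_zsmul, ← ofAdd_add]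
  simp

theorem latticeConj_lamplighterModel (s : St) (a : ℤ × ℤ) :
    latticeConj (lamplighterModel i r κ c .x) (lamplighterModel i r κ c .y)
      (lamplighterModel i r κ c (.state s)) a = i (single (s, a)) := by
  rw [latticeConj, latticeWord_lamplighterModel, lamplighterModel,
    ← shift_inv_mul_single_mul_shift s a, map_mul, map_mul, map_inv]

theorem isMachineModel_lamplighterModel
    (hr : ∀ ρ p, r ρ * i ((R ρ).1.embedding p) * (r ρ)⁻¹ = i ((R ρ).2.embedding p))
    (hκr : ∀ ρ, Commute κ (r ρ)) (hκs : ∀ s ∈ H, Commute κ (i (single (s, 0)))) :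
    IsMachineModel R H (lamplighterModel i r κ c) := by
  set u := lamplighterModel i r κ c with hu
  have hstep (ρ : Rule) (a : ℤ × ℤ) :
      u (.rule ρ) * latticeWord (u .x) (u .y) ((R ρ).1.step * a) * (u (.rule ρ))⁻¹ =
        latticeWord (u .x) (u .y) ((R ρ).2.step * a) := by
    rw [hu, latticeWord_lamplighterModel, latticeWord_lamplighterModel,
      ← AffineCopy.embedding_shift, ← AffineCopy.embedding_shift]
    exact hr ρ _
  refine ⟨((Commute.all _ _).map shift).map i, fun ρ => ?_, fun ρ => ?_, fun ρ => ?_, hκr, hκs _⟩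
  · simpa [latticeWord] using hstep ρ (1, 0)
  · simpa [latticeWord] using hstep ρ (0, 1)
  · rw [hu, latticeConj_lamplighterModel, latticeConj_lamplighterModel,
      ← AffineCopy.embedding_single_zero, ← AffineCopy.embedding_single_zero]
    exact hr ρ _

end LamplighterModel

open Lamplighter in
theorem exists_isMachineModel_of_not_haltConnected [Finite Rule] {c : St × ℤ × ℤ}
    (hc : ¬HaltConnected R H c) :
    ∃ (U : Type) (_ : Group U) (u : MachineGen St Rule → U), IsMachineModel R H u ∧
      latticeConj (u .x) (u .y) (u (.state c.1)) c.2 = u .τ ∧ (∀ g, ¬IsOfFinOrder (u g)) ∧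
      ¬IsOfFinOrder ⁅u .κ, u .τ⁆ := by
  obtain ⟨E, _, j, r, T, hj, hT, hr, hconj⟩ := exists_lamplighter_extension R H
  obtain ⟨U, _, ψ, κ, z, hψ, hz, hκT, hκ, hκ', hrz⟩ := exists_extension_centralizing T
  have hi : Function.Injective (ψ.comp j) := hψ.comp hj
  have hsingle (c : St × ℤ × ℤ) : ¬IsOfFinOrder (ψ.comp j (single c)) :=
    fun h => not_isOfFinOrder_single c (hi.isOfFinOrder_iff.1 h)
  have hshift {a : ℤ × ℤ} (ha : a ≠ 0) : ¬IsOfFinOrder (ψ.comp j (shift (.ofAdd a))) := fun h =>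
    ha ((shift_injective.isOfFinOrder_iff.1 (hi.isOfFinOrder_iff.1 h)).eq_one')
  have hrule (ρ : Rule) (p : Lamplighter Unit (ℤ × ℤ)) :
      ψ (r ρ) * z * ψ.comp j ((R ρ).1.embedding p) * (ψ (r ρ) * z)⁻¹ =
        ψ.comp j ((R ρ).2.embedding p) := by
    simp only [MonoidHom.comp_apply, ← hconj, map_mul, map_inv, mul_inv_rev]
    rw [mul_assoc (ψ (r ρ)), (hz _).eq]
    group
  refine ⟨U, _, lamplighterModel (ψ.comp j) (fun ρ => ψ (r ρ) * z) κ c,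
    isMachineModel_lamplighterModel hrule
      (fun ρ => (hκT _ (hr ρ)).mul_right (hz κ).symm)
      (fun s hs => hκT _ ((hT (s, 0)).2 (.halt hs))),
    latticeConj_lamplighterModel c.1 c.2, ?_, hκ' _ (mt (hT c).1 hc)⟩
  rintro (_ | _ | s | ρ | _ | _)
  exacts [hshift (by simp), hshift (by simp), hsingle _, hrz _, hκ, hsingle _]

end MachineGroup

section HasTorsion

variable {G H : Type*} [Group G] [Group H]

/-- `G` has a nontrivial element of finite order. For noncommutative groups this is weaker than
`¬IsMulTorsionFree G`, since `IsMulTorsionFree` asks for uniqueness of roots. -/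
def HasTorsion (G : Type*) [Group G] : Prop :=
  ∃ x : G, x ≠ 1 ∧ IsOfFinOrder x

theorem HasTorsion.of_injective (h : HasTorsion G) (φ : G →* H) (hφ : Function.Injective φ) :
    HasTorsion H :=
  let ⟨x, hx, hfin⟩ := h
  ⟨φ x, (map_ne_one_iff φ hφ).2 hx, φ.isOfFinOrder hfin⟩

theorem not_hasTorsion_of_isMulTorsionFree [IsMulTorsionFree G] : ¬HasTorsion G :=
  fun ⟨_, hx, hfin⟩ => hx hfin.eq_one'

end HasTorsion

section TorsionMarker

open scoped commutatorElement

universe u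

variable {X : Type u} {R : Set (FreeGroup X)} {v : FreeGroup X}

theorem lift_freeGroupMap {X Y U : Type*} [Group U] (f : Y → U) (g : X → Y) (w : FreeGroup X) :
    FreeGroup.lift f (FreeGroup.map g w) = FreeGroup.lift (f ∘ g) w :=
  DFunLike.congr_fun (FreeGroup.ext_hom ((FreeGroup.lift f).comp (FreeGroup.map g)) _
    fun x => by simp) w

/-- The relators of a group obtained from `⟨X | R⟩` by adding letters `s x` for `x ∈ X`, with
`s x * v * (s x)⁻¹ = x`, and a letter `y` with `⁅y, v⁆ ^ 2 = 1`. The letter `y` is `Sum.inr none`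
and `s x` is `Sum.inr (some x)`. If `v = 1` holds in `⟨X | R⟩`, all letters of `X` die and the group
is free; otherwise `⁅y, v⁆` is meant to be an element of order two. -/
def markerRels (R : Set (FreeGroup X)) (v : FreeGroup X) : Set (FreeGroup (X ⊕ Option X)) :=
  let y : FreeGroup (X ⊕ Option X) := .of (.inr none)
  let s (x : X) : FreeGroup (X ⊕ Option X) := .of (.inr (some x))
  FreeGroup.map .inl '' R ∪
  Set.range (fun x => s x * FreeGroup.map .inl v * (s x)⁻¹ * (.of (.inl x))⁻¹) ∪
  {⁅y, FreeGroup.map .inl v⁆ ^ 2}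

theorem finite_markerRels [Finite X] (hR : R.Finite) : (markerRels R v).Finite :=
  ((hR.image _).union (Set.finite_range _)).union (Set.finite_singleton _)

theorem markerRels_insert (a : FreeGroup X) :
    markerRels (insert a R) v = insert (FreeGroup.map .inl a) (markerRels R v) := by
  simp only [markerRels, Set.image_insert_eq, Set.insert_union]

theorem lift_eq_one_of_mem_markerRels {U : Type*} [Group U] {f : X ⊕ Option X → U}
    (hR : ∀ w ∈ R, FreeGroup.lift (f ∘ .inl) w = 1)
    (hs : ∀ x, f (.inr (some x)) * FreeGroup.lift (f ∘ .inl) v * (f (.inr (some x)))⁻¹ = f (.inl x))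
    (hy : ⁅f (.inr none), FreeGroup.lift (f ∘ .inl) v⁆ ^ 2 = 1) :
    ∀ w ∈ markerRels R v, FreeGroup.lift f w = 1 := by
  rintro _ ((⟨w, hw, rfl⟩ | ⟨x, rfl⟩) | rfl)
  · rw [lift_freeGroupMap, hR w hw]
  · simp [lift_freeGroupMap, hs]
  · simpa [map_commutatorElement, lift_freeGroupMap] using hy

theorem of_inl_eq_one_of_mk_eq_one (hv : PresentedGroup.mk R v = 1) (x : X) :
    PresentedGroup.of (rels := markerRels R v) (.inl x) = 1 := by
  have hv' : PresentedGroup.mk (markerRels R v) (FreeGroup.map .inl v) = 1 := by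
    have hR : R ⊆ ((PresentedGroup.mk (markerRels R v)).comp (FreeGroup.map .inl)).ker :=
      fun w hw => PresentedGroup.one_of_mem (.inl (.inl ⟨w, hw, rfl⟩))
    exact Subgroup.normalClosure_le_normal hR (PresentedGroup.mk_eq_one_iff.1 hv)
  have hx := PresentedGroup.one_of_mem (rels := markerRels R v) (.inl (.inr ⟨x, rfl⟩))
  simp only [hv', map_mul, map_inv, mul_one, mul_inv_cancel, one_mul, inv_eq_one] at hx
  exact hx

theorem not_hasTorsion_of_mk_eq_one (hv : PresentedGroup.mk R v = 1) :
    ¬HasTorsion (PresentedGroup (markerRels R v)) := by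
  let f : X ⊕ Option X → FreeGroup (Option X) := Sum.elim 1 .of
  have hf (w : FreeGroup X) : FreeGroup.lift (f ∘ .inl) w = 1 :=
    DFunLike.congr_fun (FreeGroup.ext_hom _ 1 fun x => by simp [f]) w
  let φ : PresentedGroup (markerRels R v) →* FreeGroup (Option X) :=
    PresentedGroup.toGroup (f := f) <| lift_eq_one_of_mem_markerRels (fun w _ => hf w)
      (fun x => by rw [hf]; simp [f]) (by rw [hf]; simp)
  let φ' : FreeGroup (Option X) →* PresentedGroup (markerRels R v) :=
    FreeGroup.lift (PresentedGroup.of ∘ .inr)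
  have hφ : φ'.comp φ = .id _ := by
    ext (x | x)
    · simp [φ, f, of_inl_eq_one_of_mk_eq_one hv]
    · simp [φ, φ', f]
  have hinj : Function.Injective φ :=
    Function.LeftInverse.injective (g := φ') (DFunLike.congr_fun hφ)
  exact fun h => not_hasTorsion_of_isMulTorsionFree (h.of_injective φ hinj)

theorem injective_zpowersHom {U : Type*} [Group U] {g : U} (hg : ¬IsOfFinOrder g) :
    Function.Injective (zpowersHom U g) :=
  (injective_zpow_iff_not_isOfFinOrder.2 hg).comp Multiplicative.toAdd.injective

theorem exists_extension_conjugating_commutator_sq_eq_one [Finite X] {U : Type u} [Group U]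
    {u : X → U} {v : U} (hu : ∀ x, ¬IsOfFinOrder (u x)) (hv : ¬IsOfFinOrder v) :
    ∃ (E : Type u) (_ : Group E) (i : U →* E) (s : X → E) (y : E),
      (∀ x, s x * i v * (s x)⁻¹ = i (u x)) ∧ ⁅y, i v⁆ ≠ 1 ∧ ⁅y, i v⁆ ^ 2 = 1 := by
  let ε : Multiplicative (ZMod 2) := .ofAdd 1
  let target : Option X → U × Multiplicative (ZMod 2)
    | none => (v, ε)
    | some x => (u x, 1)
  have htarget : ∀ o, ¬IsOfFinOrder (target o)
    | none => fun h => hv h.fst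
    | some x => fun h => hu x h.fst
  have hsource : ¬IsOfFinOrder (v, (1 : Multiplicative (ZMod 2))) := fun h => hv h.fst
  obtain ⟨E, _, j, r, -, hj, -, -, hconj⟩ := exists_extension_conjugating_family (S := ⊤)
    (fun _ => injective_zpowersHom hsource) (fun o => injective_zpowersHom (htarget o))
    (fun _ => rfl)
  replace hconj (o) : r o * j (v, 1) * (r o)⁻¹ = j (target o) := by
    simpa using hconj o (.ofAdd 1)
  have hy : ⁅r none, j (v, 1)⁆ = j (1, ε) := by
    rw [commutatorElement_def, hconj, ← map_inv, ← map_mul]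
    simp [target]
  refine ⟨E, _, j.comp (.inl U _), r ∘ some, r none, fun x => hconj (some x), ?_, ?_⟩
  · rw [MonoidHom.comp_apply, MonoidHom.inl_apply, hy, Ne, map_eq_one_iff j hj]
    exact fun h => absurd (congrArg Prod.snd h) (by decide : ε ≠ 1)
  · have hε : ((1, ε) : U × Multiplicative (ZMod 2)) ^ 2 = 1 :=
      Prod.ext (one_pow 2) (by decide : ε ^ 2 = 1)
    rw [MonoidHom.comp_apply, MonoidHom.inl_apply, hy, ← map_pow, hε, map_one]

theorem hasTorsion_of_not_isOfFinOrder [Finite X] {U : Type u} [Group U] {u : X → U}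
    (hR : ∀ w ∈ R, FreeGroup.lift u w = 1) (hu : ∀ x, ¬IsOfFinOrder (u x))
    (hv : ¬IsOfFinOrder (FreeGroup.lift u v)) :
    HasTorsion (PresentedGroup (markerRels R v)) := by
  obtain ⟨E, _, i, s, y, hs, hy, hy2⟩ := exists_extension_conjugating_commutator_sq_eq_one hu hv
  let f : X ⊕ Option X → E := Sum.elim (i ∘ u) fun o => o.elim y s
  have hf (w : FreeGroup X) : FreeGroup.lift (f ∘ .inl) w = i (FreeGroup.lift u w) :=
    DFunLike.congr_fun (FreeGroup.ext_hom _ (i.comp (FreeGroup.lift u)) fun x => by simp [f]) w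
  let φ : PresentedGroup (markerRels R v) →* E := PresentedGroup.toGroup (f := f) <|
    lift_eq_one_of_mem_markerRels (fun w hw => by rw [hf, hR w hw, map_one])
      (fun x => by rw [hf]; exact hs x) (by rw [hf]; exact hy2)
  let c : PresentedGroup (markerRels R v) :=
    PresentedGroup.mk _ ⁅(.of (.inr none) : FreeGroup (X ⊕ Option X)), FreeGroup.map .inl v⁆
  have hφ : φ c = ⁅y, i (FreeGroup.lift u v)⁆ := by
    change FreeGroup.lift f _ = _
    rw [map_commutatorElement, lift_freeGroupMap, hf, FreeGroup.lift_apply_of]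
    rfl
  have hc : c ^ 2 = 1 := PresentedGroup.one_of_mem (.inr rfl)
  refine ⟨c, fun h => hy ?_, isOfFinOrder_iff_pow_eq_one.2 ⟨2, two_pos, hc⟩⟩
  rw [← hφ, h, map_one]

end TorsionMarker

section MachineTorsion

open scoped commutatorElement

variable {St Rule : Type} [Finite St] [Finite Rule]
  {R : Rule → AffineCopy St (ℤ × ℤ) × AffineCopy St (ℤ × ℤ)} {H : Set St} {c : St × ℤ × ℤ}

/-- The commutator that is trivial in the machine group with input `c` exactly when `c` is connected
to a halting configuration. -/
def haltWord (St Rule : Type) : FreeGroup (MachineGen St Rule) :=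
  let u := FreeGroup.of
  ⁅u .κ, u .τ⁆

theorem hasTorsion_iff_not_haltConnected :
    HasTorsion (PresentedGroup (markerRels (insert (inputRel c) (machineRels R H))
      (haltWord St Rule))) ↔ ¬HaltConnected R H c := by
  refine ⟨fun h hc => not_hasTorsion_of_mk_eq_one ?_ h, fun hc => ?_⟩
  · set S := insert (inputRel c) (machineRels R H)
    have hmk : FreeGroup.lift (PresentedGroup.of (rels := S)) = PresentedGroup.mk S :=
      FreeGroup.ext_hom _ _ fun _ => FreeGroup.lift_apply_of
    have hlift (w) (hw : w ∈ S) : FreeGroup.lift (PresentedGroup.of (rels := S)) w = 1 :=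
      hmk ▸ PresentedGroup.one_of_mem hw
    have hu := isMachineModel_iff_lift_eq_one.2 fun w hw => hlift w (.inr hw)
    have hτ := lift_inputRel_eq_one_iff.1 (hlift _ (.inl rfl))
    have hκτ := hu.commute_κ_of_haltConnected hc
    rw [hτ] at hκτ
    rw [haltWord, map_commutatorElement, commutatorElement_eq_one_iff_commute]
    exact hκτ
  · obtain ⟨U, _, u, hu, hτ, hfin, hκτ⟩ := exists_isMachineModel_of_not_haltConnected hc
    refine hasTorsion_of_not_isOfFinOrder (u := u) ?_ hfin ?_
    · rintro w (rfl | hw)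
      · exact lift_inputRel_eq_one_iff.2 hτ
      · exact isMachineModel_iff_lift_eq_one.1 hu w hw
    · simpa [haltWord, map_commutatorElement] using hκτ

end MachineTorsion

section TuringMachine

open Turing

variable {n : ℕ}

/-- The number whose base `n + 1` digits are the symbols of a half-tape, least significant first.
The blank symbol is `0`. -/
def tapeCode (L : ListBlank (Fin (n + 1))) : ℕ :=
  L.liftOn (fun l => Nat.ofDigits (n + 1) (l.map Fin.val)) <| by
    rintro l _ ⟨k, rfl⟩
    simp only [List.map_append, List.map_replicate, Fin.default_eq_zero, Fin.val_zero,
      Nat.ofDigits_append_replicate_zero]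

theorem tapeCode_mk (l : List (Fin (n + 1))) :
    tapeCode (ListBlank.mk l) = Nat.ofDigits (n + 1) (l.map Fin.val) :=
  rfl

theorem tapeCode_cons (a : Fin (n + 1)) (L : ListBlank (Fin (n + 1))) :
    tapeCode (L.cons a) = a + (n + 1) * tapeCode L := by
  induction L using ListBlank.induction_on with
  | _ l => rw [ListBlank.cons_mk, tapeCode_mk, tapeCode_mk, List.map_cons, Nat.ofDigits_cons]

theorem tapeCode_eq_add_mul_iff {L : ListBlank (Fin (n + 1))} {a : Fin (n + 1)} {z : ℤ} :
    (tapeCode L : ℤ) = a + (n + 1) * z ↔ L.head = a ∧ tapeCode L.tail = z := by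
  constructor
  · intro h
    rw [← L.cons_head_tail, tapeCode_cons] at h
    push_cast at h
    have hmod := congrArg (· % (n + 1 : ℤ)) h
    simp only [Int.add_mul_emod_self_left] at hmod
    rw [Int.emod_eq_of_lt (by positivity) (mod_cast Fin.is_lt _),
      Int.emod_eq_of_lt (by positivity) (mod_cast Fin.is_lt _)] at hmod
    rw [hmod, add_right_inj] at h
    exact ⟨Fin.ext (mod_cast hmod), mul_left_cancel₀ (by positivity) h⟩
  · rintro ⟨rfl, rfl⟩
    rw [← L.cons_head_tail, tapeCode_cons]
    simp

/-- The opposite direction on a tape. -/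
def oppositeDir : Dir → Dir
  | .left => .right
  | .right => .left

theorem move_oppositeDir_move {Γ : Type*} [Inhabited Γ] (d : Dir) (t : Tape Γ) :
    (t.move d).move (oppositeDir d) = t := by
  cases d <;> simp [oppositeDir]

theorem move_move_oppositeDir {Γ : Type*} [Inhabited Γ] (d : Dir) (t : Tape Γ) :
    (t.move (oppositeDir d)).move d = t := by
  cases d <;> simp [oppositeDir]

variable {Q : Type}

/-- The configuration of the affine machine that encodes a configuration of a Turing machine: its
state is the state of the Turing machine together with the symbol being read, and its position
consists of the codes of the two half-tapes. -/
def cfgCode (c : TM0.Cfg (Fin (n + 1)) Q) : (Q × Fin (n + 1)) × ℤ × ℤ :=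
  ((c.q, c.Tape.head), tapeCode c.Tape.left, tapeCode c.Tape.right)

/-- The codes of the half-tapes without the symbol next to the head in direction `d`. -/
def restCode (d : Dir) (t : Tape (Fin (n + 1))) : ℤ × ℤ :=
  match d with
  | .left => (tapeCode t.left.tail, tapeCode t.right)
  | .right => (tapeCode t.left, tapeCode t.right.tail)

theorem restCode_oppositeDir_move (d : Dir) (t : Tape (Fin (n + 1))) :
    restCode (oppositeDir d) (t.move d) = restCode d t := by
  cases d <;> simp [restCode, oppositeDir, Tape.move]

/-- All positions in state `s`. -/
def wholeLattice (s : Q × Fin (n + 1)) : AffineCopy (Q × Fin (n + 1)) (ℤ × ℤ) where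
  state := s
  origin := 0
  step := 1
  isLeftRegular_step := isRegular_one.left

/-- The positions in state `s` for which the symbol next to the head in direction `d` is `b`. -/
def latticeWithSymbol (s : Q × Fin (n + 1)) (d : Dir) (b : Fin (n + 1)) :
    AffineCopy (Q × Fin (n + 1)) (ℤ × ℤ) where
  state := s
  origin := match d with
    | .left => (b, 0)
    | .right => (0, b)
  step := match d with
    | .left => (n + 1, 1)
    | .right => (1, n + 1)
  isLeftRegular_step := by
    have hn : IsLeftRegular (n + 1 : ℤ) := (IsRegular.of_ne_zero (by positivity)).left
    cases d
    exacts [hn.prodMk isRegular_one.left, isRegular_one.left.prodMk hn]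

theorem point_wholeLattice (s : Q × Fin (n + 1)) (z : ℤ × ℤ) :
    (wholeLattice s).point z = (s, z) := by
  simp [AffineCopy.point, wholeLattice]

theorem cfgCode_eq_point_latticeWithSymbol_iff {c : TM0.Cfg (Fin (n + 1)) Q} {s : Q × Fin (n + 1)}
    {d : Dir} {b : Fin (n + 1)} {z : ℤ × ℤ} :
    cfgCode c = (latticeWithSymbol s d b).point z ↔
      (c.q, c.Tape.head) = s ∧ (c.Tape.move d).head = b ∧ restCode d c.Tape = z := by
  cases d <;>
  simp [AffineCopy.point, latticeWithSymbol, cfgCode, restCode, Prod.ext_iff, Tape.move,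
    tapeCode_eq_add_mul_iff, and_assoc, and_left_comm]

variable [Inhabited Q] (M : TM0.Machine (Fin (n + 1)) Q)

/-- The rules of the affine machine simulating a Turing machine. A halted configuration may lose any
symbol next to the head, so that it is connected to the configuration with empty half-tapes. -/
def turingRule : (Q × Fin (n + 1)) × Dir × Fin (n + 1) →
    AffineCopy (Q × Fin (n + 1)) (ℤ × ℤ) × AffineCopy (Q × Fin (n + 1)) (ℤ × ℤ)
  | (s, d, b) =>
    match M s.1 s.2 with
    | none => (latticeWithSymbol s d b, wholeLattice s)
    | some (q, .write a) => (wholeLattice s, wholeLattice (q, a))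
    | some (q, .move d') =>
      (latticeWithSymbol s d' b, latticeWithSymbol (q, b) (oppositeDir d') s.2)

/-- The states of the affine machine in which the Turing machine has halted. -/
def haltingStates : Set (Q × Fin (n + 1)) := {s | M s.1 s.2 = none}

/-- The Turing machine `M` halts when started from a configuration. -/
def Halts (c : TM0.Cfg (Fin (n + 1)) Q) : Prop := (StateTransition.eval (TM0.step M) c).Dom

variable {M}

theorem halts_iff_of_mem_step {c c' : TM0.Cfg (Fin (n + 1)) Q} (h : c' ∈ TM0.step M c) :
    Halts M c ↔ Halts M c' := by
  rw [Halts, Halts, StateTransition.reaches_eval (.single h)]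

theorem halts_of_mem_haltingStates {c : TM0.Cfg (Fin (n + 1)) Q}
    (h : (c.q, c.Tape.head) ∈ haltingStates M) : Halts M c :=
  Part.dom_iff_mem.2 ⟨c, StateTransition.mem_eval.2 ⟨.refl, Option.map_eq_none_iff.2 h⟩⟩

theorem forall_halts_point_turingRule_iff (ρ : (Q × Fin (n + 1)) × Dir × Fin (n + 1)) (z : ℤ × ℤ) :
    (∀ c, cfgCode c = (turingRule M ρ).1.point z → Halts M c) ↔
      ∀ c, cfgCode c = (turingRule M ρ).2.point z → Halts M c := by
  obtain ⟨⟨q, a⟩, d, b⟩ := ρ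
  rcases hM : M q a with _ | ⟨q', d' | a'⟩ <;>
    simp only [turingRule, hM, cfgCode_eq_point_latticeWithSymbol_iff, point_wholeLattice]
  · have hhalts {c : TM0.Cfg (Fin (n + 1)) Q} (hc : (c.q, c.Tape.head) = (q, a)) : Halts M c :=
      halts_of_mem_haltingStates (hc ▸ hM)
    exact iff_of_true (fun c hc => hhalts hc.1) fun c hc => hhalts (congrArg Prod.fst hc)
  · have hstep (t : Tape (Fin (n + 1))) (ht : t.head = a) :
        Halts M ⟨q, t⟩ ↔ Halts M ⟨q', t.move d'⟩ :=
      halts_iff_of_mem_step (by simp [TM0.step, ht, hM])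
    constructor
    · rintro h ⟨_, t⟩ ⟨⟨rfl, rfl⟩, ht, rfl⟩
      have := (hstep (t.move (oppositeDir d')) ht).1 (h _ ⟨by simp [ht], ?_, ?_⟩)
      · simpa only [move_move_oppositeDir] using this
      · simp only [move_move_oppositeDir]
      · simpa only [move_move_oppositeDir] using
          (restCode_oppositeDir_move d' (t.move (oppositeDir d'))).symm
    · rintro h ⟨_, t⟩ ⟨⟨rfl, rfl⟩, rfl, rfl⟩
      exact (hstep t rfl).2
        (h _ ⟨rfl, by rw [move_oppositeDir_move], restCode_oppositeDir_move d' t⟩)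
  · have hstep (t : Tape (Fin (n + 1))) (ht : t.head = a) :
        Halts M ⟨q, t⟩ ↔ Halts M ⟨q', t.write a'⟩ :=
      halts_iff_of_mem_step (by simp [TM0.step, ht, hM])
    constructor
    · rintro h ⟨_, t⟩ ⟨⟨rfl, rfl⟩, rfl⟩
      exact (hstep (t.write a) rfl).1 (h _ rfl)
    · rintro h ⟨_, t⟩ ⟨⟨rfl, rfl⟩, rfl⟩
      exact (hstep t rfl).2 (h _ rfl)

theorem halts_of_haltConnected {x : (Q × Fin (n + 1)) × ℤ × ℤ}
    (hx : HaltConnected (turingRule M) (haltingStates M) x) (c : TM0.Cfg (Fin (n + 1)) Q)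
    (hc : cfgCode c = x) : Halts M c := by
  induction hx generalizing c with
  | halt hs =>
    obtain rfl := congrArg Prod.fst hc
    exact halts_of_mem_haltingStates hs
  | forward ρ z _ ih => exact (forall_halts_point_turingRule_iff ρ z).1 ih c hc
  | backward ρ z _ ih => exact (forall_halts_point_turingRule_iff ρ z).2 ih c hc

theorem haltConnected_of_mem_haltingStates {c : TM0.Cfg (Fin (n + 1)) Q}
    (hs : (c.q, c.Tape.head) ∈ haltingStates M) :
    HaltConnected (turingRule M) (haltingStates M) (cfgCode c) := by
  obtain ⟨q, a, L, R⟩ := c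
  have hrule (d : Dir) (b : Fin (n + 1)) : turingRule M ((q, a), d, b) =
      (latticeWithSymbol (q, a) d b, wholeLattice (q, a)) := by
    simp only [turingRule, show M q a = none from hs]
  have hpop (d : Dir) (t : Tape (Fin (n + 1))) (ht : t.head = a)
      (h : HaltConnected (turingRule M) (haltingStates M) ((q, a), restCode d t)) :
      HaltConnected (turingRule M) (haltingStates M) (cfgCode ⟨q, t⟩) := by
    have hbackward := HaltConnected.backward (R := turingRule M) (H := haltingStates M)
      ((q, a), d, (t.move d).head) (restCode d t)
    rw [hrule, point_wholeLattice, ← (cfgCode_eq_point_latticeWithSymbol_iff (c := ⟨q, t⟩)).2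
      ⟨congrArg (q, ·) ht, rfl, rfl⟩] at hbackward
    exact hbackward h
  induction L using ListBlank.induction_on with | _ l
  induction R using ListBlank.induction_on with | _ r
  induction l with
  | nil =>
    induction r with
    | nil => exact .halt hs
    | cons b r ih => exact hpop .right _ rfl (ih hs)
  | cons b l ih => exact hpop .left _ rfl (ih hs)

theorem haltConnected_cfgCode_iff_halts {c : TM0.Cfg (Fin (n + 1)) Q} :
    HaltConnected (turingRule M) (haltingStates M) (cfgCode c) ↔ Halts M c := by
  refine ⟨fun h => halts_of_haltConnected h c rfl, fun h => ?_⟩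
  obtain ⟨c', hc'⟩ := Part.dom_iff_mem.1 h
  obtain ⟨hreach, hnone⟩ := StateTransition.mem_eval.1 hc'
  clear h hc'
  induction hreach using Relation.ReflTransGen.head_induction_on with
  | refl => exact haltConnected_of_mem_haltingStates (Option.map_eq_none_iff.1 hnone)
  | @head c c₁ hstep _ ih =>
    obtain ⟨q, t⟩ := c
    obtain ⟨⟨q', d | a⟩, hM, rfl⟩ := Option.map_eq_some_iff.1 hstep
    · have hrule := HaltConnected.backward (R := turingRule M) (H := haltingStates M)
        ((q, t.head), d, (t.move d).head) (restCode d t)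
      simp only [turingRule, hM] at hrule
      rw [← cfgCode_eq_point_latticeWithSymbol_iff (c := ⟨q, t⟩) |>.2 ⟨rfl, rfl, rfl⟩,
        ← cfgCode_eq_point_latticeWithSymbol_iff (c := ⟨q', t.move d⟩) |>.2
          ⟨rfl, by rw [move_oppositeDir_move], restCode_oppositeDir_move d t⟩] at hrule
      exact hrule ih
    · have hrule := HaltConnected.backward (R := turingRule M) (H := haltingStates M)
        ((q, t.head), .left, 0) (tapeCode t.left, tapeCode t.right)
      simp only [turingRule, hM, point_wholeLattice] at hrule
      exact hrule ih

end TuringMachine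

section HaltingProblem

open Turing

theorem exists_equiv_fin_default_eq_zero (Γ : Type*) [Inhabited Γ] [Finite Γ] :
    ∃ (n : ℕ) (e : Γ ≃ Fin (n + 1)), e default = 0 := by
  obtain ⟨_ | n, ⟨e⟩⟩ := Finite.exists_equiv_fin Γ
  · exact (e default).elim0
  · exact ⟨n, e.trans (Equiv.swap (e default) 0), by simp⟩

theorem exists_finite_tm0 {Γ Λ : Type} [Inhabited Γ] [Finite Γ] [Inhabited Λ] (M : TM0.Machine Γ Λ)
    {S : Set Λ} [Finite S] (hS : TM0.Supports M S) :
    ∃ (n : ℕ) (Q : Type) (_ : Finite Q) (_ : Inhabited Q) (M' : TM0.Machine (Fin (n + 1)) Q)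
      (e : Γ → Fin (n + 1)), ∀ l, Halts M' (TM0.init (l.map e)) ↔ (TM0.eval M l).Dom := by
  classical
  obtain ⟨n, e, he⟩ := exists_equiv_fin_default_eq_zero Γ
  let _ : Inhabited S := ⟨⟨default, hS.1⟩⟩
  let e₁ : PointedMap Γ (Fin (n + 1)) := ⟨e, he⟩
  let e₂ : PointedMap (Fin (n + 1)) Γ := ⟨e.symm, e.symm_apply_eq.2 he.symm⟩
  let g : PointedMap Λ S := ⟨fun q => if hq : q ∈ S then ⟨q, hq⟩ else default, dif_pos hS.1⟩
  have hg (q : Λ) (hq : q ∈ S) : (g q : Λ) = q := congrArg Subtype.val (dif_pos hq)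
  refine ⟨n, S, ‹_›, inferInstance, M.map e₁ e₂ g Subtype.val, e, fun l => ?_⟩
  exact StateTransition.tr_eval_dom
    (TM0.Machine.map_respects M e₁ e₂ g Subtype.val hS e.symm_apply_apply hg)
    ⟨hS.1, TM0.map_init e₁ g l⟩

instance : Finite PartrecToTM2.K' :=
  .of_surjective (fun i : Fin 4 => ![.main, .rev, .aux, .stack] i) <| by
    rintro (_ | _ | _ | _)
    exacts [⟨0, rfl⟩, ⟨1, rfl⟩, ⟨2, rfl⟩, ⟨3, rfl⟩]

theorem exists_finite_tm0_of_tm2 {K : Type} [DecidableEq K] [Finite K] {Γ : K → Type}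
    [∀ k, Finite (Γ k)] {Λ σ : Type} [Inhabited Λ] [Inhabited σ] [Finite σ]
    (M : Λ → TM2.Stmt Γ Λ σ) {S : Finset Λ} (hS : TM2.Supports M S) (k : K) :
    ∃ (n : ℕ) (Q : Type) (_ : Finite Q) (_ : Inhabited Q) (M' : TM0.Machine (Fin (n + 1)) Q)
      (e : TM2to1.Γ' K Γ → Fin (n + 1)),
      ∀ l, Halts M' (TM0.init ((TM2to1.trInit k l).map e)) ↔ (TM2.eval M k l).Dom := by
  have := Fintype.ofFinite K
  have := Fintype.ofFinite σ
  have : Finite (TM2to1.Γ' K Γ) := inferInstanceAs (Finite (Bool × ∀ k, Option (Γ k)))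
  obtain ⟨n, Q, hQ, hQ', M', e, h⟩ := exists_finite_tm0 _
    (TM1to0.tr_supports (TM2to1.tr M) (TM2to1.tr_supports M hS))
  refine ⟨n, Q, hQ, hQ', M', e, fun l => ?_⟩
  rw [h, TM1to0.tr_eval, TM2to1.tr_eval_dom]

theorem exists_finite_tm0_of_code (c : ToPartrec.Code) :
    ∃ (n : ℕ) (Q : Type) (_ : Finite Q) (_ : Inhabited Q) (M : TM0.Machine (Fin (n + 1)) Q)
      (e : TM2to1.Γ' PartrecToTM2.K' (fun _ => PartrecToTM2.Γ') → Fin (n + 1)),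
      ∀ v, Halts M (TM0.init ((TM2to1.trInit .main (PartrecToTM2.trList v)).map e)) ↔
        (c.eval v).Dom := by
  -- The machine `PartrecToTM2.tr` serves all codes at once; `c` only enters as its initial label.
  let _ : Inhabited PartrecToTM2.Λ' := ⟨PartrecToTM2.trNormal c .halt⟩
  obtain ⟨n, Q, hQ, hQ', M, e, h⟩ := exists_finite_tm0_of_tm2 PartrecToTM2.tr
    (PartrecToTM2.tr_supports c .halt) PartrecToTM2.K'.main
  refine ⟨n, Q, hQ, hQ', M, e, fun v => (h _).trans ?_⟩
  have init_eq : TM2.init PartrecToTM2.K'.main (PartrecToTM2.trList v) = PartrecToTM2.init c v := by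
    refine congrArg (TM2.Cfg.mk _ _) (funext fun i => ?_)
    cases i <;> rfl
  have eval_eq := PartrecToTM2.tr_eval c v
  rw [← init_eq] at eval_eq
  exact iff_of_eq (congrArg Part.Dom eval_eq)

theorem exists_posNum_eq_two_pow (k : ℕ) :
    ∃ p : PosNum, (p : ℕ) = 2 ^ k ∧
      PartrecToTM2.trPosNum p = List.replicate k PartrecToTM2.Γ'.bit0 ++ [.bit1] := by
  induction k with
  | zero => exact ⟨1, by simp, rfl⟩
  | succ k ih =>
    obtain ⟨p, hp, htr⟩ := ih
    refine ⟨p.bit0, ?_, ?_⟩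
    · rw [PosNum.cast_bit0, hp, pow_succ, mul_two]
    · simp [PartrecToTM2.trPosNum, htr, List.replicate_succ]

theorem trList_two_pow (k : ℕ) :
    PartrecToTM2.trList [2 ^ k] = List.replicate k PartrecToTM2.Γ'.bit0 ++ [.bit1, .cons] := by
  obtain ⟨p, hp, htr⟩ := exists_posNum_eq_two_pow k
  have hnum : ((2 ^ k : ℕ) : Num) = Num.pos p := by
    simpa only [Num.cast_pos, hp] using Num.of_to_nat (Num.pos p)
  simp [PartrecToTM2.trList, PartrecToTM2.trNat, hnum, PartrecToTM2.trNum, htr]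

theorem exists_partrec_comp_eq {σ : Type*} [Primcodable σ] {f : ℕ →. σ} (hf : Partrec f)
    {h : ℕ → ℕ} (hh : Computable h) (hinj : Function.Injective h) :
    ∃ g : ℕ →. σ, Partrec g ∧ ∀ k, g (h k) = f k := by
  refine ⟨fun m => (Nat.rfind fun k => Part.some (decide (h k = m))).bind f, ?_, fun k => ?_⟩
  · have hdec : Computable₂ fun m k => decide (h k = m) :=
      (Primrec.eq (α := ℕ)).decide.to_comp.comp (hh.comp .snd) .fst
    exact (Partrec.rfind hdec.partrec₂).bind (hf.comp Computable.snd).to₂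
  · have hfind : Nat.rfind (fun k' => Part.some (decide (h k' = h k))) = Part.some k :=
      Part.eq_some_iff.2 (Nat.mem_rfind.2 ⟨by simp, fun hm => by simpa using hinj.ne hm.ne⟩)
    exact (congrArg (Part.bind · f) hfind).trans (Part.bind_some k f)

theorem primrec_two_pow : Primrec fun k : ℕ => 2 ^ k :=
  (Primrec.nat_rec₁ 1 (Primrec.nat_mul.comp .snd (.const 2)).to₂).of_eq fun k => by
    induction k with
    | zero => rfl
    | succ k ih => rw [pow_succ, ← ih]

theorem exists_tm0_halts_iff {f : ℕ →. ℕ} (hf : Partrec f) :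
    ∃ (n : ℕ) (Q : Type) (_ : Finite Q) (_ : Inhabited Q) (M : TM0.Machine (Fin (n + 1)) Q)
      (a b z : Fin (n + 1)),
      ∀ k, Halts M (TM0.init (a :: b :: List.replicate k z)) ↔ (f k).Dom := by
  -- The binary expansion of `2 ^ k` turns unary input into input for a machine reading binary.
  obtain ⟨g, hg, hgf⟩ := exists_partrec_comp_eq hf primrec_two_pow.to_comp
    (Nat.pow_right_injective le_rfl)
  obtain ⟨c, hc⟩ := ToPartrec.Code.exists_code (Nat.Partrec'.part_iff₁.2 hg)
  obtain ⟨n, Q, hQ, hQ', M, e, hM⟩ := exists_finite_tm0_of_code c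
  let cell (bottom : Bool) (s : PartrecToTM2.Γ') : Fin (n + 1) :=
    e (bottom, Function.update (fun _ => none) PartrecToTM2.K'.main (some s))
  refine ⟨n, Q, hQ, hQ', M, cell true .cons, cell false .bit1, cell false .bit0, fun k => ?_⟩
  have trInit_eq : (TM2to1.trInit .main (PartrecToTM2.trList [2 ^ k])).map e =
      cell true .cons :: cell false .bit1 :: List.replicate k (cell false .bit0) := by
    rw [TM2to1.trInit, trList_two_pow]
    simp only [List.reverse_append, List.reverse_replicate, List.reverse_cons, List.reverse_nil,
      List.nil_append, List.cons_append]
    exact congrArg (_ :: _ :: ·) (List.map_map.trans List.map_replicate)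
  have eval_eq : c.eval [2 ^ k] = pure <$> f k := by
    rw [← hgf]
    exact hc ⟨[2 ^ k], rfl⟩
  rw [← trInit_eq, hM, eval_eq]
  rfl

instance : Finite Dir :=
  .of_surjective (fun b : Bool => cond b .left .right) (by rintro (_ | _) <;> simp)

/-- The starting value of the affine register: the base-`(n + 1)` number with lowest digit `b`
followed by `k` digits `z`. -/
def repeatedDigit (n b z k : ℕ) : ℕ :=
  Nat.ofDigits (n + 1) (b :: List.replicate k z)

theorem primrec_repeatedDigit (n b z : ℕ) : Primrec (repeatedDigit n b z) := by
  have htail : Primrec fun k => Nat.ofDigits (n + 1) (List.replicate k z) :=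
    (Primrec.nat_rec₁ 0 (Primrec.nat_add.comp (.const z)
      (Primrec.nat_mul.comp (.const (n + 1)) .snd)).to₂).of_eq fun k => by
        induction k with
        | zero => rfl
        | succ k ih => rw [List.replicate_succ, Nat.ofDigits_cons, ← ih]
  exact (Primrec.nat_add.comp (.const b) (Primrec.nat_mul.comp (.const (n + 1)) htail)).of_eq
    fun _ => Nat.ofDigits_cons.symm

theorem exists_affine_machine {f : ℕ →. ℕ} (hf : Partrec f) :
    ∃ (St Rule : Type) (_ : Finite St) (_ : Finite Rule)
      (R : Rule → AffineCopy St (ℤ × ℤ) × AffineCopy St (ℤ × ℤ)) (H : Set St) (s₀ : St)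
      (N : ℕ → ℕ), Primrec N ∧ ∀ k, HaltConnected R H (s₀, 0, (N k : ℤ)) ↔ (f k).Dom := by
  obtain ⟨n, Q, hQ, hQ', M, a, b, z, hM⟩ := exists_tm0_halts_iff hf
  refine ⟨_, _, inferInstance, inferInstance, turingRule M, haltingStates M, (default, a),
    repeatedDigit n b z, primrec_repeatedDigit n b z, fun k => ?_⟩
  rw [← hM, ← haltConnected_cfgCode_iff_halts]
  have cfgCode_eq : cfgCode (TM0.init (a :: b :: List.replicate k z) : TM0.Cfg _ Q) =
      ((default, a), 0, (repeatedDigit n b z k : ℤ)) := by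
    simp [cfgCode, TM0.init, repeatedDigit, Tape.mk₁, Tape.mk₂, Tape.mk', tapeCode_mk]
  rw [cfgCode_eq]

end HaltingProblem

section FreeProductTorsion

open Monoid.CoprodI

variable {ι : Type*} {G : ι → Type*} [∀ i, Group (G i)] {i j : ι}

theorem neWord_prod_ne_one (w : NeWord G i j) : w.prod ≠ 1 := by
  classical
  intro h
  have hempty : w.toWord = Word.empty :=
    (Word.equiv (M := G)).symm.injective (h.trans Word.prod_empty.symm)
  exact w.toList_ne_nil (congrArg Word.toList hempty)

theorem exists_neWord_prod_eq_pow (hij : i ≠ j) (w : NeWord G i j) (n : ℕ) :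
    ∃ w' : NeWord G i j, w'.prod = w.prod ^ (n + 1) := by
  induction n with
  | zero => exact ⟨w, by rw [zero_add, pow_one]⟩
  | succ n ih =>
    obtain ⟨w', hw'⟩ := ih
    exact ⟨.append w' hij.symm w, by rw [NeWord.append_prod, hw', ← pow_succ]⟩

theorem not_isOfFinOrder_neWord_prod (hij : i ≠ j) (w : NeWord G i j) :
    ¬ IsOfFinOrder w.prod := by
  intro h
  obtain ⟨n, hn, hpow⟩ := isOfFinOrder_iff_pow_eq_one.1 h
  obtain ⟨w', hw'⟩ := exists_neWord_prod_eq_pow hij w (n - 1)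
  rw [Nat.sub_add_cancel hn, hpow] at hw'
  exact neWord_prod_ne_one w' hw'

theorem neWord_uncons (w : NeWord G i j) :
    (i = j ∧ w.prod = of w.head) ∨ ∃ k, k ≠ i ∧ ∃ w' : NeWord G k j,
      w.prod = of w.head * w'.prod ∧ w'.toList.length < w.toList.length := by
  induction w with
  | singleton x hx => exact .inl ⟨rfl, NeWord.prod_singleton x hx⟩
  | append w₁ hne w₂ ih₁ _ =>
    right
    have length_pos := List.length_pos_iff.2 w₁.toList_ne_nil
    obtain ⟨rfl, hprod⟩ | ⟨k, hk, w', hprod, hlt⟩ := ih₁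
    · refine ⟨_, hne.symm, w₂, by rw [NeWord.append_prod, hprod, NeWord.append_head], ?_⟩
      rw [NeWord.toList, List.length_append]
      lia
    · refine ⟨k, hk, .append w' hne w₂, ?_, ?_⟩
      · rw [NeWord.append_prod, NeWord.append_prod, hprod, mul_assoc, NeWord.append_head]
      · simpa only [NeWord.toList, List.length_append, add_lt_add_iff_right] using hlt

theorem length_toList_neWord_inv (w : NeWord G i j) :
    w.inv.toList.length = w.toList.length := by
  induction w with
  | singleton => rfl
  | append w₁ hne w₂ ih₁ ih₂ => simp [NeWord.inv, NeWord.toList, ih₁, ih₂, add_comm]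

theorem isConj_of_or_isConj_neWord (w : NeWord G i j) :
    (∃ k, ∃ x : G k, IsConj w.prod (of x)) ∨
      ∃ k l, k ≠ l ∧ ∃ v : NeWord G k l, IsConj w.prod v.prod := by
  induction hn : w.toList.length using Nat.strong_induction_on generalizing i j with
  | _ n ih
  obtain hij | rfl := ne_or_eq i j
  · exact .inr ⟨i, j, hij, w, .refl _⟩
  obtain ⟨-, hprod⟩ | ⟨k, hk, w', hprod, hlt⟩ := neWord_uncons w
  · exact .inl ⟨i, w.head, hprod ▸ .refl _⟩
  have rotate : IsConj w.prod (w'.prod * of w.head) :=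
    isConj_iff.2 ⟨(of w.head)⁻¹, by rw [hprod]; group⟩
  by_cases hcancel : w.head⁻¹ * w'.inv.head = 1
  · obtain ⟨hik, -⟩ | ⟨l, -, v, hv, hlt'⟩ := neWord_uncons w'.inv
    · exact absurd hik hk.symm
    have hconj : IsConj w.prod v.inv.prod := by
      rwa [← inv_inv w'.prod, ← NeWord.inv_prod, hv, ← inv_mul_eq_one.1 hcancel, mul_inv_rev,
        inv_mul_cancel_right, ← NeWord.inv_prod] at rotate
    have hshorter : v.inv.toList.length < n := by
      rw [length_toList_neWord_inv] at hlt' ⊢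
      lia
    exact (ih _ hshorter v.inv rfl).imp
      (fun ⟨k, x, hx⟩ => ⟨k, x, hconj.trans hx⟩)
      (fun ⟨k, l, hkl, u, hu⟩ => ⟨k, l, hkl, u, hconj.trans hu⟩)
  · refine .inr ⟨k, i, hk, (w'.inv.mulHead _ hcancel).inv, ?_⟩
    rwa [NeWord.inv_prod, NeWord.mulHead_prod, NeWord.inv_prod, mul_inv_rev, inv_inv, map_inv,
      inv_inv]

theorem exists_isConj_of_of_isOfFinOrder {g : Monoid.CoprodI G} (hg : IsOfFinOrder g)
    (hne : g ≠ 1) : ∃ i, ∃ x : G i, IsConj g (of x) := by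
  classical
  have hword : Word.equiv g ≠ Word.empty := fun h => hne <| by
    rw [← Word.equiv.symm_apply_apply g, h]
    exact Word.prod_empty
  obtain ⟨i, j, w, hw⟩ := NeWord.of_word _ hword
  have hprod : w.prod = g := (congrArg Word.prod hw).trans (Word.equiv.symm_apply_apply g)
  obtain hconj | ⟨k, l, hkl, v, hv⟩ := isConj_of_or_isConj_neWord w
  · exact hprod ▸ hconj
  · rw [hprod] at hv
    obtain ⟨c, hc⟩ := isConj_iff.1 hv
    refine absurd ?_ (not_isOfFinOrder_neWord_prod hkl v)
    rw [← hc]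
    exact (MulAut.conj c).toMonoidHom.isOfFinOrder hg

variable [DecidableEq ι]

/-- The projection of a free product onto a factor, killing the other factors. -/
def coprodIProj (i : ι) : Monoid.CoprodI G →* G i :=
  lift (Pi.mulSingle i (MonoidHom.id (G i)))

theorem coprodIProj_of_same (x : G i) : coprodIProj i (of x) = x :=
  of_leftInverse i x

theorem coprodIProj_of_ne (hij : j ≠ i) (x : G j) : coprodIProj i (of x) = 1 := by
  rw [coprodIProj, lift_of, Pi.mulSingle_eq_of_ne hij, MonoidHom.one_apply]

theorem existsUnique_coprodIProj_ne_one {g : Monoid.CoprodI G} (hg : IsOfFinOrder g)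
    (hne : g ≠ 1) : ∃! i, coprodIProj i g ≠ 1 := by
  obtain ⟨i, x, hconj⟩ := exists_isConj_of_of_isOfFinOrder hg hne
  have proj_eq_one_iff (j : ι) : coprodIProj j g = 1 ↔ coprodIProj j (of x) = 1 := by
    obtain ⟨c, hc⟩ := isConj_iff.1 hconj
    rw [← hc, map_mul, map_mul, map_inv, mul_inv_eq_one, mul_eq_left]
  have hx : x ≠ 1 := by
    rintro rfl
    exact hne (isConj_one_left.1 (map_one (of : G i →* _) ▸ hconj))
  refine ⟨i, ?_, fun j hj => ?_⟩
  · simpa only [ne_eq, proj_eq_one_iff, coprodIProj_of_same] using hx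
  · by_contra hji
    exact hj ((proj_eq_one_iff j).2 (coprodIProj_of_ne (Ne.symm hji) x))

end FreeProductTorsion

section WordProblem

theorem rePred_comp {α β : Type*} [Primcodable α] [Primcodable β] {p : β → Prop} {f : α → β}
    (hp : REPred p) (hf : Computable f) : REPred fun a => p (f a) :=
  Partrec.comp hp hf

theorem rePred_exists {α β : Type*} [Primcodable α] [Primcodable β] {p : α → β → Prop}
    (hp : PrimrecRel p) : REPred fun a => ∃ b, p a b := by
  classical
  let search (a : α) (k : ℕ) : Option β := (Encodable.decode k).bind fun b =>
    if p a b then some b else none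
  have hsearch : Primrec₂ search :=
    Primrec.option_bind (Primrec.decode.comp .snd) <|
      Primrec.ite (hp.comp (Primrec.fst.comp .fst) .snd) (Primrec.option_some.comp .snd)
        (.const none)
  refine (Partrec.rfindOpt hsearch.to_comp).dom_re.of_eq fun a => ?_
  rw [Nat.rfindOpt_dom]
  constructor
  · rintro ⟨k, b, hb⟩
    obtain ⟨b', -, hb'⟩ := Option.bind_eq_some_iff.1 hb
    by_contra hnone
    simp only [if_neg (not_exists.1 hnone b'), reduceCtorEq] at hb'
  · rintro ⟨b, hb⟩
    exact ⟨Encodable.encode b, b, by simp [search, hb]⟩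

theorem mem_normalClosure_range_iff {G ι : Type*} [Group G] (r : ι → G) (x : G) :
    x ∈ Subgroup.normalClosure (Set.range r) ↔ ∃ l : List (G × Bool × ι),
      (l.map fun q => q.1 * cond q.2.1 (r q.2.2) (r q.2.2)⁻¹ * q.1⁻¹).prod = x := by
  constructor
  · intro hx
    induction hx using Subgroup.closure_induction with
    | mem y hy =>
      obtain ⟨_, ⟨i, rfl⟩, hconj⟩ := Group.mem_conjugatesOfSet_iff.1 hy
      obtain ⟨u, rfl⟩ := isConj_iff.1 hconj
      exact ⟨[(u, true, i)], by simp⟩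
    | one => exact ⟨[], rfl⟩
    | mul y z _ _ ihy ihz =>
      obtain ⟨⟨l, rfl⟩, m, rfl⟩ := And.intro ihy ihz
      exact ⟨l ++ m, by rw [List.map_append, List.prod_append]⟩
    | inv y _ ih =>
      obtain ⟨l, rfl⟩ := ih
      refine ⟨(l.map fun q => (q.1, !q.2.1, q.2.2)).reverse, ?_⟩
      rw [List.prod_inv_reverse, List.map_reverse, List.map_map, List.map_map]
      congr 3
      funext ⟨u, b, i⟩
      cases b <;> simp [mul_assoc]
  · rintro ⟨l, rfl⟩
    refine Subgroup.list_prod_mem _ fun y hy => ?_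
    obtain ⟨⟨u, b, i⟩, -, rfl⟩ := List.mem_map.1 hy
    have hmem : r i ∈ Subgroup.normalClosure (Set.range r) :=
      Subgroup.subset_normalClosure ⟨i, rfl⟩
    refine Subgroup.normalClosure_normal.conj_mem _ ?_ u
    cases b
    exacts [inv_mem hmem, hmem]

theorem mk_flatMap {α β : Type*} (f : β → List (α × Bool)) (l : List β) :
    FreeGroup.mk (l.flatMap f) = (l.map fun b => FreeGroup.mk (f b)).prod := by
  induction l with
  | nil => rfl
  | cons b l ih => rw [List.flatMap_cons, ← FreeGroup.mul_mk, ih, List.map_cons, List.prod_cons]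

section Words

variable {α : Type*} [Primcodable α]

theorem primrec_invRev : Primrec (FreeGroup.invRev : List (α × Bool) → List (α × Bool)) :=
  Primrec.list_reverse.comp <| Primrec.list_map .id <|
    Primrec.pair (Primrec.fst.comp .snd) (Primrec.not.comp (Primrec.snd.comp .snd))

theorem primrec_reduce [DecidableEq α] :
    Primrec (FreeGroup.reduce : List (α × Bool) → List (α × Bool)) := by
  let pushLetter (a : α × Bool) (w : List (α × Bool)) : List (α × Bool) :=
    List.casesOn w [a] fun b w' => if a.1 = b.1 ∧ a.2 = !b.2 then w' else a :: b :: w'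
  have hpush : Primrec₂ pushLetter := by
    have hcancel : PrimrecPred fun q : ((α × Bool) × List (α × Bool)) ×
        ((α × Bool) × List (α × Bool)) => q.1.1.1 = q.2.1.1 ∧ q.1.1.2 = !q.2.1.2 :=
      (Primrec.eq.comp (Primrec.fst.comp (Primrec.fst.comp .fst))
          (Primrec.fst.comp (Primrec.fst.comp .snd))).and
        (Primrec.eq.comp (Primrec.snd.comp (Primrec.fst.comp .fst))
          (Primrec.not.comp (Primrec.snd.comp (Primrec.fst.comp .snd))))
    exact Primrec.list_casesOn .snd (Primrec.list_cons.comp .fst (.const [])) <|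
      Primrec.to₂ <| Primrec.ite hcancel (Primrec.snd.comp .snd) <|
        Primrec.list_cons.comp (Primrec.fst.comp .fst)
          (Primrec.list_cons.comp (Primrec.fst.comp .snd) (Primrec.snd.comp .snd))
  have hfoldr : Primrec fun w : List (α × Bool) => w.foldr pushLetter [] :=
    Primrec.list_foldr .id (.const []) <|
      (hpush.comp (Primrec.fst.comp .snd) (Primrec.snd.comp .snd)).to₂
  refine hfoldr.of_eq fun w => ?_
  induction w with
  | nil => rfl
  | cons a w ih => rw [FreeGroup.reduce.cons, List.foldr_cons, ih]

end Words

/-- The `j`-th relator of the encoded presentation `P`: the words of the list `P.2`, followed by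
the superfluous generators `P.1, P.1 + 1, …`. -/
def relatorWord (P : ℕ × List (List (ℕ × Bool))) (j : ℕ) : List (ℕ × Bool) :=
  P.2[j]?.getD [(P.1 + (j - P.2.length), true)]

theorem range_mk_relatorWord (P : ℕ × List (List (ℕ × Bool))) :
    Set.range (fun j => FreeGroup.mk (relatorWord P j)) = presRels P := by
  ext x
  constructor
  · rintro ⟨j, rfl⟩
    rcases hj : P.2[j]? with _ | w
    · exact .inr ⟨_, Nat.le_add_right P.1 (j - P.2.length),
        by simp only [relatorWord, hj, Option.getD_none, FreeGroup.of]⟩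
    · exact .inl ⟨w, List.mem_of_getElem? hj, by simp only [relatorWord, hj, Option.getD_some]⟩
  · rintro (⟨w, hw, rfl⟩ | ⟨i, hi, rfl⟩)
    · obtain ⟨j, hj⟩ := List.mem_iff_getElem?.1 hw
      exact ⟨j, by simp only [relatorWord, hj, Option.getD_some]⟩
    · exact ⟨P.2.length + (i - P.1), by simp [relatorWord, FreeGroup.of, Nat.add_sub_cancel' hi]⟩

theorem primrec_relatorWord : Primrec₂ relatorWord :=
  Primrec.option_getD.comp (Primrec.list_getElem?.comp (Primrec.snd.comp .fst) .snd) <|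
    Primrec.list_cons.comp
      (Primrec.pair
        (Primrec.nat_add.comp (Primrec.fst.comp .fst)
          (Primrec.nat_sub.comp .snd (Primrec.list_length.comp (Primrec.snd.comp .fst))))
        (.const true))
      (.const [])

/-- The word `u r^{±1} u⁻¹` with `r` the `j`-th relator of `P`, where `q = (u, ±, j)`. -/
def relatorConjWord (P : ℕ × List (List (ℕ × Bool))) (q : List (ℕ × Bool) × Bool × ℕ) :
    List (ℕ × Bool) :=
  q.1 ++ (cond q.2.1 (relatorWord P q.2.2) (FreeGroup.invRev (relatorWord P q.2.2)) ++
    FreeGroup.invRev q.1)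

theorem mk_relatorConjWord (P : ℕ × List (List (ℕ × Bool))) (q : List (ℕ × Bool) × Bool × ℕ) :
    FreeGroup.mk (relatorConjWord P q) = FreeGroup.mk q.1 *
      cond q.2.1 (FreeGroup.mk (relatorWord P q.2.2)) (FreeGroup.mk (relatorWord P q.2.2))⁻¹ *
        (FreeGroup.mk q.1)⁻¹ := by
  obtain ⟨u, b, j⟩ := q
  cases b <;> simp [relatorConjWord, FreeGroup.inv_mk, FreeGroup.mul_mk]

theorem primrec_relatorConjWord : Primrec₂ relatorConjWord := by
  have hrel : Primrec fun q : (ℕ × List (List (ℕ × Bool))) × List (ℕ × Bool) × Bool × ℕ =>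
      relatorWord q.1 q.2.2.2 :=
    primrec_relatorWord.comp .fst (Primrec.snd.comp (Primrec.snd.comp .snd))
  exact Primrec.list_append.comp (Primrec.fst.comp .snd) <|
    Primrec.list_append.comp
      (Primrec.cond (Primrec.fst.comp (Primrec.snd.comp .snd)) hrel (primrec_invRev.comp hrel))
      (primrec_invRev.comp (Primrec.fst.comp .snd))

theorem presProj_mk_eq_one_iff (P : ℕ × List (List (ℕ × Bool))) (w : List (ℕ × Bool)) :
    presProj P (FreeGroup.mk w) = 1 ↔ ∃ l : List (List (ℕ × Bool) × Bool × ℕ),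
      FreeGroup.reduce (l.flatMap (relatorConjWord P)) = FreeGroup.reduce w := by
  simp_rw [← FreeGroup.toWord_mk, FreeGroup.toWord_inj, mk_flatMap, mk_relatorConjWord]
  refine PresentedGroup.mk_eq_one_iff.trans ?_
  rw [← range_mk_relatorWord, mem_normalClosure_range_iff]
  constructor
  · rintro ⟨l, hl⟩
    refine ⟨l.map fun q => (q.1.toWord, q.2), ?_⟩
    simpa only [List.map_map, Function.comp_def, FreeGroup.mk_toWord] using hl
  · rintro ⟨l, hl⟩
    refine ⟨l.map fun q => (FreeGroup.mk q.1, q.2), ?_⟩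
    simpa only [List.map_map, Function.comp_def] using hl

theorem rePred_presProj_mk_eq_one :
    REPred fun q : (ℕ × List (List (ℕ × Bool))) × List (ℕ × Bool) =>
      presProj q.1 (FreeGroup.mk q.2) = 1 := by
  have htest : PrimrecRel fun (q : (ℕ × List (List (ℕ × Bool))) × List (ℕ × Bool))
      (l : List (List (ℕ × Bool) × Bool × ℕ)) =>
      FreeGroup.reduce (l.flatMap (relatorConjWord q.1)) = FreeGroup.reduce q.2 :=
    Primrec.eq.comp
      (primrec_reduce.comp <| Primrec.list_flatMap .snd <|
        primrec_relatorConjWord.comp (Primrec.fst.comp (Primrec.fst.comp .fst)) .snd)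
      (primrec_reduce.comp (Primrec.snd.comp .fst))
  exact (rePred_exists htest).of_eq fun q => (presProj_mk_eq_one_iff q.1 q.2).symm

end WordProblem

section PresentationCodes

variable {P : ℕ × List (List (ℕ × Bool))} {U : Type*} [Group U]

theorem forall_mem_presRels {p : FreeGroup ℕ → Prop} :
    (∀ r ∈ presRels P, p r) ↔
      (∀ w ∈ P.2, p (FreeGroup.mk w)) ∧ ∀ i, P.1 ≤ i → p (FreeGroup.of i) := by
  constructor
  · exact fun h => ⟨fun w hw => h _ (.inl ⟨w, hw, rfl⟩), fun i hi => h _ (.inr ⟨i, hi, rfl⟩)⟩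
  · rintro ⟨hword, hgen⟩ r (⟨w, hw, rfl⟩ | ⟨i, hi, rfl⟩)
    exacts [hword w hw, hgen i hi]

theorem presProj_mk_of_mem {w : List (ℕ × Bool)} (hw : w ∈ P.2) :
    presProj P (FreeGroup.mk w) = 1 :=
  PresentedGroup.one_of_mem (.inl ⟨w, hw, rfl⟩)

theorem presProj_of_of_le {i : ℕ} (hi : P.1 ≤ i) : presProj P (FreeGroup.of i) = 1 :=
  PresentedGroup.one_of_mem (.inr ⟨i, hi, rfl⟩)

/-- The homomorphism out of `presGroup P` induced by one that kills the relators of `P`. -/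
def presLift (φ : FreeGroup ℕ →* U) (hφ : ∀ r ∈ presRels P, φ r = 1) : presGroup P →* U :=
  QuotientGroup.lift _ φ fun _ hx =>
    Subgroup.normalClosure_le_normal (N := φ.ker) (fun r hr => hφ r hr) hx

theorem presLift_presProj {φ : FreeGroup ℕ →* U} (hφ : ∀ r ∈ presRels P, φ r = 1)
    (x : FreeGroup ℕ) : presLift φ hφ (presProj P x) = φ x := rfl

theorem presGroup_hom_ext {φ ψ : presGroup P →* U}
    (h : ∀ i, φ (presProj P (FreeGroup.of i)) = ψ (presProj P (FreeGroup.of i))) : φ = ψ :=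
  PresentedGroup.ext h

theorem nonempty_presGroup_mulEquiv {X : Type*} {n : ℕ} (e : X ≃ Fin n) {R : Set (FreeGroup X)}
    {L : List (List (ℕ × Bool))}
    (hL : FreeGroup.mk '' {w | w ∈ L} = FreeGroup.map (fun x => (e x : ℕ)) '' R) :
    Nonempty (presGroup (n, L) ≃* PresentedGroup R) := by
  let f (i : ℕ) : PresentedGroup R := if h : i < n then .of (e.symm ⟨i, h⟩) else 1
  have hf (x : X) : f (e x) = .of x := by simp [f]
  have hmap (r : FreeGroup X) :
      FreeGroup.lift f (FreeGroup.map (fun x => (e x : ℕ)) r) = PresentedGroup.mk R r := by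
    rw [lift_freeGroupMap]
    exact DFunLike.congr_fun (FreeGroup.ext_hom _ _ fun x => by simp [hf, PresentedGroup.of]) r
  have hforth : ∀ r ∈ presRels (n, L), FreeGroup.lift f r = 1 := by
    refine forall_mem_presRels.2 ⟨fun w hw => ?_, fun i hi => by simp [f, Nat.not_lt.2 hi]⟩
    obtain ⟨r, hr, hrw⟩ := hL.subset ⟨w, hw, rfl⟩
    rw [← hrw, hmap, PresentedGroup.one_of_mem hr]
  have hback : ∀ r ∈ R, FreeGroup.lift (fun x => presProj (n, L) (.of (e x))) r = 1 := by
    intro r hr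
    obtain ⟨w, hw, hwr⟩ := hL.superset ⟨r, hr, rfl⟩
    have hcomp : FreeGroup.lift (fun x => presProj (n, L) (.of (e x))) =
        (presProj (n, L)).comp (FreeGroup.map fun x => (e x : ℕ)) :=
      FreeGroup.ext_hom _ _ fun x => by simp
    rw [hcomp, MonoidHom.comp_apply, ← hwr, presProj_mk_of_mem hw]
  refine ⟨MonoidHom.toMulEquiv (presLift _ hforth) (PresentedGroup.toGroup hback) ?_ ?_⟩
  · refine presGroup_hom_ext fun i => ?_
    rw [MonoidHom.comp_apply, presLift_presProj, FreeGroup.lift_apply_of, MonoidHom.id_apply]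
    by_cases hi : i < n
    · simp [f, hi]
    · simp [f, hi, presProj_of_of_le (P := (n, L)) (Nat.not_lt.1 hi)]
  · refine PresentedGroup.ext fun x => ?_
    rw [MonoidHom.comp_apply, PresentedGroup.toGroup.of, presLift_presProj,
      FreeGroup.lift_apply_of, hf, MonoidHom.id_apply]

theorem exists_list_image_mk_eq {S : Set (FreeGroup ℕ)} (hS : S.Finite) :
    ∃ L : List (List (ℕ × Bool)), FreeGroup.mk '' {w | w ∈ L} = S := by
  classical
  refine ⟨hS.toFinset.toList.map FreeGroup.toWord, ?_⟩
  ext x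
  simp [FreeGroup.mk_toWord]

end PresentationCodes

section FreeProductCode

/-- The word obtained from `w` by replacing the letter `i` by `φ i`, or by deleting it where
`φ i = none`. -/
def renameWord (φ : ℕ → Option ℕ) (w : List (ℕ × Bool)) : List (ℕ × Bool) :=
  w.filterMap fun a => (φ a.1).map fun i => (i, a.2)

/-- The endomorphism of the free group induced by `renameWord φ`. -/
def renameHom (φ : ℕ → Option ℕ) : FreeGroup ℕ →* FreeGroup ℕ :=
  FreeGroup.lift fun i => (φ i).elim 1 .of

theorem mk_renameWord (φ : ℕ → Option ℕ) (w : List (ℕ × Bool)) :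
    FreeGroup.mk (renameWord φ w) = renameHom φ (FreeGroup.mk w) := by
  induction w with
  | nil => rfl
  | cons a w ih =>
    obtain ⟨i, b⟩ := a
    rw [← List.singleton_append, ← FreeGroup.mul_mk, map_mul, ← ih]
    rcases hi : φ i with _ | j <;> cases b <;>
      simp [renameWord, renameHom, hi, FreeGroup.of, FreeGroup.inv_mk, FreeGroup.invRev]

theorem primrec_renameWord {α : Type*} [Primcodable α] {φ : α → ℕ → Option ℕ}
    {w : α → List (ℕ × Bool)} (hφ : Primrec₂ φ) (hw : Primrec w) :
    Primrec fun a => renameWord (φ a) (w a) :=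
  Primrec.listFilterMap hw <| Primrec.to₂ <|
    Primrec.option_map (hφ.comp .fst (Primrec.fst.comp .snd)) <| Primrec.to₂ <|
      Primrec.pair .snd (Primrec.snd.comp (Primrec.snd.comp .fst))

/-- The name in a free product of the `i`-th generator of its first (`b = false`) or second
(`b = true`) factor, where `n` is the number of generators of the first factor. It is `none` for
the letters `i ≥ n` of the first factor, which are trivial. -/
def factorEmb (n : ℕ) (b : Bool) (i : ℕ) : Option ℕ :=
  cond b (some (n + i)) (if i < n then some i else none)

/-- The partial inverse of `factorEmb n b`, undefined on the letters of the other factor. -/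
def factorProj (n : ℕ) (b : Bool) (i : ℕ) : Option ℕ :=
  cond b (if i < n then none else some (i - n)) (if i < n then some i else none)

theorem primrec_factorEmb (b : Bool) : Primrec₂ fun n i => factorEmb n b i := by
  have hlt : PrimrecPred fun q : ℕ × ℕ => q.2 < q.1 := Primrec.nat_lt.comp .snd .fst
  cases b
  · exact Primrec.ite hlt (Primrec.option_some.comp .snd) (.const none)
  · exact Primrec.option_some.comp (Primrec.nat_add.comp .fst .snd)

theorem primrec_factorProj (b : Bool) : Primrec₂ fun n i => factorProj n b i := by
  have hlt : PrimrecPred fun q : ℕ × ℕ => q.2 < q.1 := Primrec.nat_lt.comp .snd .fst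
  cases b
  · exact Primrec.ite hlt (Primrec.option_some.comp .snd) (.const none)
  · exact Primrec.ite hlt (.const none)
      (Primrec.option_some.comp (Primrec.nat_sub.comp .snd .fst))

/-- A code for the free product of the groups encoded by `P` and `Q`. -/
def freeProductCode (P Q : ℕ × List (List (ℕ × Bool))) : ℕ × List (List (ℕ × Bool)) :=
  (P.1 + Q.1,
    P.2.map (renameWord (factorEmb P.1 false)) ++ Q.2.map (renameWord (factorEmb P.1 true)))

theorem primrec_freeProductCode : Primrec₂ freeProductCode := by
  have hfst : Primrec fun q : (ℕ × List (List (ℕ × Bool))) × ℕ × List (List (ℕ × Bool)) => q.1.1 :=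
    Primrec.fst.comp .fst
  have hrename (b : Bool) : Primrec₂ fun
      (q : (ℕ × List (List (ℕ × Bool))) × ℕ × List (List (ℕ × Bool))) (w : List (ℕ × Bool)) =>
      renameWord (factorEmb q.1.1 b) w :=
    primrec_renameWord
      ((primrec_factorEmb b).comp (hfst.comp (Primrec.fst.comp .fst)) .snd) .snd
  exact Primrec.pair (Primrec.nat_add.comp hfst (Primrec.fst.comp .snd)) <|
    Primrec.list_append.comp (Primrec.list_map (Primrec.snd.comp .fst) (hrename false))
      (Primrec.list_map (Primrec.snd.comp .snd) (hrename true))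

variable (P : Bool → ℕ × List (List (ℕ × Bool)))

/-- The homomorphism sending a letter of `freeProductCode (P false) (P true)` to the generator
of the free product `Monoid.CoprodI` that it names. -/
def freeProductLift : FreeGroup ℕ →* Monoid.CoprodI fun b => presGroup (P b) :=
  FreeGroup.lift fun i =>
    if i < (P false).1 then .of (presProj (P false) (.of i))
    else .of (presProj (P true) (.of (i - (P false).1)))

theorem freeProductLift_renameHom_factorEmb (b : Bool) (x : FreeGroup ℕ) :
    freeProductLift P (renameHom (factorEmb (P false).1 b) x) =
      Monoid.CoprodI.of (M := fun b => presGroup (P b)) (presProj (P b) x) := by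
  refine DFunLike.congr_fun (FreeGroup.ext_hom ((freeProductLift P).comp
    (renameHom (factorEmb (P false).1 b)))
    ((Monoid.CoprodI.of (M := fun b => presGroup (P b))).comp (presProj (P b))) fun i => ?_) x
  cases b
  · by_cases hi : i < (P false).1
    · simp [renameHom, factorEmb, freeProductLift, hi]
    · simp [renameHom, factorEmb, hi, presProj_of_of_le (Nat.not_lt.1 hi)]
  · simp [renameHom, factorEmb, freeProductLift]

theorem coprodIProj_freeProductLift (b : Bool) (x : FreeGroup ℕ) :
    coprodIProj b (freeProductLift P x) =
      presProj (P b) (renameHom (factorProj (P false).1 b) x) := by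
  refine DFunLike.congr_fun (FreeGroup.ext_hom ((coprodIProj b).comp (freeProductLift P))
    ((presProj (P b)).comp (renameHom (factorProj (P false).1 b))) fun i => ?_) x
  by_cases hi : i < (P false).1 <;> cases b <;>
    simp [renameHom, factorProj, freeProductLift, hi, coprodIProj_of_same, coprodIProj_of_ne]

theorem freeProductLift_eq_one_of_mem :
    ∀ r ∈ presRels (freeProductCode (P false) (P true)), freeProductLift P r = 1 := by
  have hword (b : Bool) : ∀ w ∈ (P b).2.map (renameWord (factorEmb (P false).1 b)),
      freeProductLift P (FreeGroup.mk w) = 1 := by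
    refine List.forall_mem_map.2 fun w hw => ?_
    rw [mk_renameWord, freeProductLift_renameHom_factorEmb, presProj_mk_of_mem hw, map_one]
  refine forall_mem_presRels.2
    ⟨List.forall_mem_append.2 ⟨hword false, hword true⟩, fun i hi => ?_⟩
  have hi' : (P false).1 + (P true).1 ≤ i := hi
  rw [freeProductLift, FreeGroup.lift_apply_of, if_neg (by omega),
    presProj_of_of_le (by omega), map_one]

theorem presProj_renameHom_factorEmb_eq_one_of_mem (b : Bool) :
    ∀ r ∈ presRels (P b), presProj (freeProductCode (P false) (P true))
      (renameHom (factorEmb (P false).1 b) r) = 1 := by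
  refine forall_mem_presRels.2 ⟨fun w hw => ?_, fun i hi => ?_⟩
  · rw [← mk_renameWord]
    refine presProj_mk_of_mem (List.mem_append.2 ?_)
    cases b
    exacts [.inl (List.mem_map_of_mem hw), .inr (List.mem_map_of_mem hw)]
  · cases b
    · simp [renameHom, factorEmb, Nat.not_lt.2 hi]
    · simpa [renameHom, factorEmb] using
        presProj_of_of_le (P := freeProductCode (P false) (P true)) (Nat.add_le_add_left hi _)

/-- The identification of the group of `freeProductCode` with Mathlib's free product. -/
def freeProductCodeEquiv : presGroup (freeProductCode (P false) (P true)) ≃*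
    Monoid.CoprodI fun b => presGroup (P b) :=
  MonoidHom.toMulEquiv (presLift (freeProductLift P) (freeProductLift_eq_one_of_mem P))
    (Monoid.CoprodI.lift fun b => presLift ((presProj _).comp (renameHom _))
      (presProj_renameHom_factorEmb_eq_one_of_mem P b))
    (by
      refine presGroup_hom_ext fun i => ?_
      rw [MonoidHom.comp_apply, presLift_presProj, freeProductLift, FreeGroup.lift_apply_of]
      by_cases hi : i < (P false).1
      · simp [hi, presLift_presProj, renameHom, factorEmb]
      · simp [hi, presLift_presProj, renameHom, factorEmb, Nat.add_sub_cancel' (Nat.not_lt.1 hi)])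
    (by
      refine Monoid.CoprodI.ext_hom _ _ fun b => presGroup_hom_ext fun i => ?_
      simp [presLift_presProj, freeProductLift_renameHom_factorEmb])

variable {P} {w : List (ℕ × Bool)}

theorem existsUnique_presProj_renameWord_ne_one
    (hne : presProj (freeProductCode (P false) (P true)) (FreeGroup.mk w) ≠ 1)
    (hfin : IsOfFinOrder (presProj (freeProductCode (P false) (P true)) (FreeGroup.mk w))) :
    ∃! b, presProj (P b) (FreeGroup.mk (renameWord (factorProj (P false).1 b) w)) ≠ 1 := by
  simp_rw [mk_renameWord, ← coprodIProj_freeProductLift]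
  exact existsUnique_coprodIProj_ne_one ((freeProductCodeEquiv P).toMonoidHom.isOfFinOrder hfin)
    fun h => hne ((freeProductCodeEquiv P).injective (h.trans (map_one _).symm))

theorem presProj_renameWord_eq_one_of_not_hasTorsion {b : Bool}
    (hb : ¬HasTorsion (presGroup (P b)))
    (hfin : IsOfFinOrder (presProj (freeProductCode (P false) (P true)) (FreeGroup.mk w))) :
    presProj (P b) (FreeGroup.mk (renameWord (factorProj (P false).1 b) w)) = 1 := by
  rw [mk_renameWord, ← coprodIProj_freeProductLift]
  exact by_contra fun hne => hb
    ⟨_, hne, ((coprodIProj b).comp (freeProductCodeEquiv P).toMonoidHom).isOfFinOrder hfin⟩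

theorem hasTorsion_freeProductCode {b : Bool} (hb : HasTorsion (presGroup (P b))) :
    HasTorsion (presGroup (freeProductCode (P false) (P true))) :=
  hb.of_injective
    ((freeProductCodeEquiv P).symm.toMonoidHom.comp
      (Monoid.CoprodI.of (M := fun b => presGroup (P b)) (i := b)))
    ((freeProductCodeEquiv P).symm.injective.comp (Monoid.CoprodI.of_injective b))

end FreeProductCode

section TorsionFamily

/-- The word `y⁻ⁿ t yⁿ τ⁻¹`, which is `inputRel` of the configuration `(s, 0, n)` if `t` is the
letter of the state `s`. -/
def inputWord (y t τ n : ℕ) : List (ℕ × Bool) :=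
  (List.range n).flatMap (fun _ => [(y, false)]) ++
    ((t, true) :: ((List.range n).flatMap (fun _ => [(y, true)]) ++ [(τ, false)]))

theorem primrec_inputWord (y t τ : ℕ) : Primrec (inputWord y t τ) := by
  have hpow (a : ℕ × Bool) : Primrec fun n => (List.range n).flatMap fun _ => [a] :=
    Primrec.list_flatMap Primrec.list_range (Primrec.const [a]).to₂
  exact Primrec.list_append.comp (hpow _) <|
    Primrec.list_cons.comp (.const _) (Primrec.list_append.comp (hpow _) (.const _))

theorem mk_inputWord {St Rule : Type} (num : MachineGen St Rule → ℕ) (s : St) (n : ℕ) :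
    FreeGroup.mk (inputWord (num .y) (num (.state s)) (num .τ) n) =
      FreeGroup.map num (inputRel (s, 0, (n : ℤ))) := by
  have hpow (b : Bool) : FreeGroup.mk ((List.range n).flatMap fun _ => [(num .y, b)]) =
      FreeGroup.mk [(num .y, b)] ^ n := by
    rw [mk_flatMap, List.map_const', List.prod_replicate, List.length_range]
  rw [inputWord, List.append_cons, ← FreeGroup.mul_mk, ← FreeGroup.mul_mk, ← FreeGroup.mul_mk,
    hpow, hpow]
  simp [inputRel, latticeConj, latticeWord, FreeGroup.of, FreeGroup.inv_mk, FreeGroup.invRev]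

theorem exists_primrec_hasTorsion_iff_not_dom {f : ℕ →. ℕ} (hf : Partrec f) :
    ∃ Q : ℕ → ℕ × List (List (ℕ × Bool)), Primrec Q ∧
      ∀ k, HasTorsion (presGroup (Q k)) ↔ ¬(f k).Dom := by
  obtain ⟨St, Rule, _, _, R, H, s₀, N, hN, hdom⟩ := exists_affine_machine hf
  obtain ⟨n, ⟨e⟩⟩ := Finite.exists_equiv_fin (MachineGen St Rule ⊕ Option (MachineGen St Rule))
  let num (z : MachineGen St Rule ⊕ Option (MachineGen St Rule)) : ℕ := e z
  obtain ⟨L, hL⟩ := exists_list_image_mk_eq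
    ((finite_markerRels (v := haltWord St Rule) (finite_machineRels (R := R) (H := H))).image
      (FreeGroup.map num))
  let input (k : ℕ) : List (ℕ × Bool) :=
    inputWord (num (.inl .y)) (num (.inl (.state s₀))) (num (.inl .τ)) (N k)
  have hinput (k : ℕ) : FreeGroup.mk (input k) =
      FreeGroup.map num (FreeGroup.map .inl (inputRel (s₀, 0, (N k : ℤ)))) := by
    rw [FreeGroup.map.comp]
    exact mk_inputWord (num ∘ .inl) s₀ (N k)
  refine ⟨fun k => (n, input k :: L), ?_, fun k => ?_⟩
  · exact Primrec.pair (.const n)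
      (Primrec.list_cons.comp ((primrec_inputWord _ _ _).comp hN) (.const L))
  · have hrels : FreeGroup.mk '' {w | w ∈ input k :: L} = FreeGroup.map num ''
        markerRels (insert (inputRel (s₀, 0, (N k : ℤ))) (machineRels R H))
          (haltWord St Rule) := by
      simp only [List.mem_cons, Set.ofPred_or, Set.ofPred_eq_eq_singleton, Set.singleton_union,
        Set.image_insert_eq, hL, hinput, markerRels_insert]
    obtain ⟨ε⟩ := nonempty_presGroup_mulEquiv e hrels
    rw [← hdom, ← hasTorsion_iff_not_haltConnected]
    exact ⟨fun h => h.of_injective ε.toMonoidHom ε.injective,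
      fun h => h.of_injective ε.symm.toMonoidHom ε.symm.injective⟩

theorem exists_primrec_hasTorsion_iff_not {α : Type*} [Primcodable α] {p : α → Prop}
    (hp : REPred p) : ∃ Q : α → ℕ × List (List (ℕ × Bool)), Primrec Q ∧
      ∀ a, HasTorsion (presGroup (Q a)) ↔ ¬p a := by
  obtain ⟨Q, hQ, hdom⟩ := exists_primrec_hasTorsion_iff_not_dom (Partrec.nat_iff.2 hp)
  refine ⟨fun a => Q (Encodable.encode a), hQ.comp .encode, fun a => ?_⟩
  simp [hdom, Part.assert]

end TorsionFamily

section Inseparability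

open Nat.Partrec (Code)

theorem rePred_mem {α β : Type*} [Primcodable α] [Primcodable β] {f : α →. β} {g : α → β}
    (hf : Partrec f) (hg : Computable g) : REPred fun a => g a ∈ f a := by
  classical
  have htest : Computable₂ fun (a : α) (b : β) => decide (b = g a) :=
    (PrimrecRel.decide Primrec.eq).to_comp.comp .snd (hg.comp .fst)
  have hbind := hf.bind (Partrec.cond htest (Computable.const ()).partrec Partrec.none).to₂
  refine hbind.dom_re.of_eq fun a => ?_
  rw [Part.dom_iff_mem]
  constructor
  · rintro ⟨_, h⟩
    obtain ⟨b, hb, hcond⟩ := Part.mem_bind_iff.1 h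
    by_cases hbg : b = g a
    · exact hbg ▸ hb
    · simp [hbg] at hcond
  · exact fun h => ⟨(), Part.mem_bind_iff.2 ⟨_, h, by simp⟩⟩

theorem rePred_mem_eval_encode (n : ℕ) :
    REPred fun c : Code => n ∈ c.eval (Encodable.encode c) :=
  rePred_mem (Code.eval_part.comp .id .encode) (.const n)

theorem not_computablePred_of_separates {C : Code → Prop}
    (h₀ : ∀ c, 0 ∈ c.eval (Encodable.encode c) → C c)
    (h₁ : ∀ c, 1 ∈ c.eval (Encodable.encode c) → ¬ C c) : ¬ ComputablePred C := by
  rintro ⟨hdec, hC⟩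
  let flip (k : ℕ) : ℕ := cond (decide (C (Denumerable.ofNat Code k))) 1 0
  have hflip : Computable flip :=
    Computable.cond (hC.comp (Computable.ofNat Code)) (.const 1) (.const 0)
  obtain ⟨c, hc⟩ := Code.exists_code.1 (Partrec.nat_iff.1 hflip.partrec)
  have hval : c.eval (Encodable.encode c) = Part.some (cond (decide (C c)) 1 0) := by
    simp [hc, flip]
  by_cases hcC : C c
  · exact h₁ c (by simp [hval, hcC]) hcC
  · exact hcC (h₀ c (by simp [hval, hcC]))

end Inseparability

section TorsionFinder

/-- `g` returns a nontrivial word of finite order on each encoded presentation of a group with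
torsion. -/
def FindsTorsion (g : ℕ × List (List (ℕ × Bool)) → List (ℕ × Bool)) : Prop :=
  ∀ P : ℕ × List (List (ℕ × Bool)), HasTorsion (presGroup P) →
    presProj P (FreeGroup.mk (g P)) ≠ 1 ∧ IsOfFinOrder (presProj P (FreeGroup.mk (g P)))

theorem computablePred_presProj_renameWord_eq_one {α : Type*} [Primcodable α]
    {P : Bool → α → ℕ × List (List (ℕ × Bool))} {w : α → List (ℕ × Bool)}
    (hP : ∀ b, Computable (P b)) (hw : Computable w)
    (hne : ∀ a, presProj (freeProductCode (P false a) (P true a)) (FreeGroup.mk (w a)) ≠ 1)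
    (hfin : ∀ a, IsOfFinOrder
      (presProj (freeProductCode (P false a) (P true a)) (FreeGroup.mk (w a)))) :
    ComputablePred fun a =>
      presProj (P false a)
        (FreeGroup.mk (renameWord (factorProj (P false a).1 false) (w a))) = 1 := by
  let Vanishes (b : Bool) (a : α) : Prop :=
    presProj (P b a) (FreeGroup.mk (renameWord (factorProj (P false a).1 b) (w a))) = 1
  have hre (b : Bool) : REPred (Vanishes b) := by
    have hproj : Primrec₂ fun (m : ℕ) (u : List (ℕ × Bool)) => renameWord (factorProj m b) u :=
      primrec_renameWord (Primrec.to₂ ((primrec_factorProj b).comp (Primrec.fst.comp .fst) .snd))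
        Primrec.snd
    have hw' : Computable fun a => renameWord (factorProj (P false a).1 b) (w a) :=
      hproj.to_comp.comp (Computable.fst.comp (hP false)) hw
    exact (rePred_comp rePred_presProj_mk_eq_one ((hP b).pair hw')).of_eq fun _ => Iff.rfl
  have hcompl (a : α) : Vanishes true a ↔ ¬Vanishes false a := by
    obtain ⟨b, hb, huniq⟩ :=
      existsUnique_presProj_renameWord_ne_one (P := fun b => P b a) (hne a) (hfin a)
    have hb_iff (b' : Bool) : ¬Vanishes b' a ↔ b' = b := ⟨huniq b', fun h => h ▸ hb⟩
    rw [← not_iff_not, hb_iff, not_not, ← not_iff_not, hb_iff]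
    cases b <;> simp
  exact ComputablePred.computable_iff_re_compl_re'.2 ⟨hre false, (hre true).of_eq hcompl⟩

theorem FindsTorsion.exists_computablePred_separating {α : Type*} [Primcodable α]
    {g : ℕ × List (List (ℕ × Bool)) → List (ℕ × Bool)} (hfinds : FindsTorsion g)
    (hg : Computable g) {p : Bool → α → Prop} (hp : ∀ b, REPred (p b))
    (hdisj : ∀ a, ¬(p false a ∧ p true a)) :
    ∃ C : α → Prop, ComputablePred C ∧ (∀ a, p false a → C a) ∧ ∀ a, p true a → ¬C a := by
  choose Q hQ htors using fun b => exists_primrec_hasTorsion_iff_not (hp b)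
  let F (a : α) : ℕ × List (List (ℕ × Bool)) := freeProductCode (Q false a) (Q true a)
  have hF : Computable F := (primrec_freeProductCode.comp (hQ false) (hQ true)).to_comp
  have hfound (a : α) :
      presProj (F a) (FreeGroup.mk (g (F a))) ≠ 1 ∧
        IsOfFinOrder (presProj (F a) (FreeGroup.mk (g (F a)))) := by
    obtain ⟨b, hb⟩ : ∃ b, ¬p b a := by
      by_contra! hall
      exact hdisj a ⟨hall false, hall true⟩
    exact hfinds _ (hasTorsion_freeProductCode (P := fun b => Q b a) ((htors b a).2 hb))
  have hvanish (b : Bool) (a : α) (ha : p b a) :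
      presProj (Q b a) (FreeGroup.mk (renameWord (factorProj (Q false a).1 b) (g (F a)))) = 1 :=
    presProj_renameWord_eq_one_of_not_hasTorsion (P := fun b => Q b a)
      (fun h => (htors b a).1 h ha) (hfound a).2
  refine ⟨_, computablePred_presProj_renameWord_eq_one (fun b => (hQ b).to_comp) (hg.comp hF)
    (fun a => (hfound a).1) (fun a => (hfound a).2), hvanish false, fun a ha hfalse => ?_⟩
  obtain ⟨b, hb, -⟩ := existsUnique_presProj_renameWord_ne_one (P := fun b => Q b a)
    (hfound a).1 (hfound a).2
  cases b
  · exact hb hfalse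
  · exact hb (hvanish true a ha)

end TorsionFinder

/-- (Chiodo) There is no general procedure to find a torsion element in a finitely
presented group that is known to have torsion. -/
theorem no_algorithm_finding_torsion_element :
    ¬ ∃ g : ℕ × List (List (ℕ × Bool)) → List (ℕ × Bool), Computable g ∧
      ∀ P : ℕ × List (List (ℕ × Bool)),
        (∃ x : presGroup P, x ≠ 1 ∧ IsOfFinOrder x) →
          presProj P (FreeGroup.mk (g P)) ≠ 1 ∧
            IsOfFinOrder (presProj P (FreeGroup.mk (g P))) := by
  rintro ⟨g, hg, hfinds : FindsTorsion g⟩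
  obtain ⟨C, hC, h₀, h₁⟩ := hfinds.exists_computablePred_separating hg
    (p := fun b (c : Nat.Partrec.Code) => b.toNat ∈ c.eval (Encodable.encode c))
    (fun b => rePred_mem_eval_encode b.toNat)
    (fun c h => absurd (Part.mem_unique h.1 h.2) Nat.zero_ne_one)
  exact not_computablePred_of_separates h₀ h₁ hC
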